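/- Let B be a finite set of primitive types, m a positive integer, and S_{B,m} the (finite) set of L◇-provable bracket-free sequents A_1 ⋯ A_n ⇒ A_{n+1} with n ≤ 2, all A_i built over B, and ||A_i|| ≤ m. If A_1, ..., A_{n+1} are types over B with ||A_i|| ≤ m and A_1 ⋯ A_n ⇒ A_{n+1} is provable in L◇, then A_1 ⋯ A_n ⇒ A_{n+1} is derivable from S_{B,m} using the Cut rule only. -/

import Mathlib

/-- Types of the bracketed Lambek calculus. -/
inductive PTy where
  | prim : ℕ → PTy
  | ldiv : PTy → PTy → PTy   -- ldiv A B = A \ B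
  | rdiv : PTy → PTy → PTy   -- rdiv B A = B / A
  | mul  : PTy → PTy → PTy
  | dia  : PTy → PTy
  | box  : PTy → PTy
deriving DecidableEq

/-- Type trees: leaves labeled by types, internal nodes are brackets. -/
inductive PTree where
  | leaf : PTy → PTree
  | node : List PTree → PTree

abbrev PHedge := List PTree

/-- Contexts: a hedge with one distinguished hole. -/
inductive PCtx where
  | hole : PHedge → PHedge → PCtx
  | brk  : PCtx → PHedge → PHedge → PCtx

/-- Substitution of a hedge for the hole of a context. -/
def PCtx.plug : PCtx → PHedge → PHedge
  | .hole pre post, D => pre ++ D ++ post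
  | .brk c pre post, D => pre ++ (PTree.node (c.plug D) :: post)

/-- All primitive types occurring in the type belong to `B`. -/
def PTy.over (B : Finset ℕ) : PTy → Prop
  | .prim p => p ∈ B
  | .ldiv A C => A.over B ∧ C.over B
  | .rdiv C A => C.over B ∧ A.over B
  | .mul A C => A.over B ∧ C.over B
  | .dia A => A.over B
  | .box A => A.over B

/-- Length of a type. -/
def lenP : PTy → ℕ
  | .prim _ => 1
  | .ldiv A B => lenP A + lenP B
  | .rdiv B A => lenP B + lenP A
  | .mul A B => lenP A + lenP B
  | .dia A => lenP A + 2
  | .box A => lenP A + 2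

mutual
/-- The yield of a tree: the sequence of types labeling its leaves. -/
def yieldTree : PTree → List PTy
  | .leaf A => [A]
  | .node ts => yieldHedge ts
/-- The yield of a hedge. -/
def yieldHedge : List PTree → List PTy
  | [] => []
  | t :: ts => yieldTree t ++ yieldHedge ts
end
/-- L◇ : the Lambek calculus with brackets
(the antecedent must be nonempty in the right rules for the divisions). -/
inductive PProv : PHedge → PTy → Prop where
  | id (p) : PProv [.leaf (.prim p)] (.prim p)
  | ldivL (G : PHedge) (D : PCtx) (A B C) :
      PProv G A → PProv (D.plug [.leaf B]) C →
      PProv (D.plug (G ++ [.leaf (.ldiv A B)])) C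
  | ldivR (Pi : PHedge) (A B) : Pi ≠ [] →
      PProv (.leaf A :: Pi) B → PProv Pi (.ldiv A B)
  | rdivL (G : PHedge) (D : PCtx) (A B C) :
      PProv G A → PProv (D.plug [.leaf B]) C →
      PProv (D.plug (.leaf (.rdiv B A) :: G)) C
  | rdivR (Pi : PHedge) (A B) : Pi ≠ [] →
      PProv (Pi ++ [.leaf A]) B → PProv Pi (.rdiv B A)
  | mulL (G : PCtx) (A B C) :
      PProv (G.plug [.leaf A, .leaf B]) C → PProv (G.plug [.leaf (.mul A B)]) C
  | mulR (G D : PHedge) (A B) :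
      PProv G A → PProv D B → PProv (G ++ D) (.mul A B)
  | diaL (G : PCtx) (A B) :
      PProv (G.plug [.node [.leaf A]]) B → PProv (G.plug [.leaf (.dia A)]) B
  | diaR (G : PHedge) (A) :
      PProv G A → PProv [.node G] (.dia A)
  | boxL (G : PCtx) (A B) :
      PProv (G.plug [.leaf A]) B → PProv (G.plug [.node [.leaf (.box A)]]) B
  | boxR (G : PHedge) (A) :
      PProv [.node G] A → PProv G (.box A)
  | cut (G : PHedge) (D : PCtx) (A B) :
      PProv G A → PProv (D.plug [.leaf A]) B → PProv (D.plug G) B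
/-- Derivability of a sequent from a set of sequents using the Cut rule only. -/
inductive CutDeriv (S : Set (PHedge × PTy)) : PHedge → PTy → Prop where
  | base (G A) : (G, A) ∈ S → CutDeriv S G A
  | cut (G : PHedge) (D : PCtx) (A B) :
      CutDeriv S G A → CutDeriv S (D.plug [.leaf A]) B → CutDeriv S (D.plug G) B

/-- The set `S_{B,m}` of L◇-provable bracket-free sequents with at most 2 antecedent
types, all types built over `B` of length at most `m`. -/
def SBm (B : Finset ℕ) (m : ℕ) : Set (PHedge × PTy) :=
  {s | ∃ (L : List PTy) (A : PTy),
        s = (L.map PTree.leaf, A) ∧ L.length ≤ 2 ∧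
        (∀ T ∈ A :: L, PTy.over B T ∧ lenP T ≤ m) ∧
        PProv (L.map PTree.leaf) A}

/-!
Label the primitive occurrences and the modalities of a cut-free derivation so that every label is
introduced at a single place; then every letter occurs at most twice in the endsequent. Reading a
type as a word, with divisions as quotients and modalities as conjunctions of bracket letters,
interprets derivable sequents as equalities in a free group, and the length of a type bounds the
norm of its value.

A product of at least three elements of norm at most `m` in a free group whose value also has norm
at most `m` has a shorter block of at least two factors whose value has norm at most `m`, because
the Cayley graph is a tree. Interpolation for the corresponding block of the antecedent yields a
type each of whose letters occurs once. Its word is therefore reduced, so that its length is the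
norm of the block, and cutting it in splits the sequent into two shorter ones of the same kind.
-/

section CommonPrefix

variable {α : Type*} [DecidableEq α]

/-- Length of the longest common prefix of two lists. Applied to reduced words it is the Gromov
product in the Cayley tree of a free group. -/
def commonPrefixLength : List α → List α → ℕ
  | a :: u, b :: v => if a = b then commonPrefixLength u v + 1 else 0
  | _, _ => 0

theorem min_commonPrefixLength_le (x y z : List α) :
    min (commonPrefixLength x y) (commonPrefixLength y z) ≤ commonPrefixLength x z := by
  induction x generalizing y z with
  | nil => simp [commonPrefixLength]
  | cons a x ih =>
    rcases y with _ | ⟨b, y⟩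
    · simp [commonPrefixLength]
    rcases z with _ | ⟨c, z⟩
    · simp [commonPrefixLength]
    have := ih y z
    simp only [commonPrefixLength]
    split_ifs <;> simp_all

theorem exists_eq_append_commonPrefixLength (u v : List α) :
    ∃ p u' v', u = p ++ u' ∧ v = p ++ v' ∧ p.length = commonPrefixLength u v ∧
      ∀ a ∈ u'.head?, ∀ b ∈ v'.head?, a ≠ b := by
  induction u generalizing v with
  | nil => exact ⟨[], [], v, by simp [commonPrefixLength]⟩
  | cons a u ih =>
    rcases v with _ | ⟨b, v⟩
    · exact ⟨[], a :: u, [], by simp [commonPrefixLength]⟩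
    by_cases h : a = b
    · obtain ⟨p, u', v', rfl, rfl, hlen, hhead⟩ := ih v
      exact ⟨a :: p, u', v', by simp, by simp [h], by simp [commonPrefixLength, h, hlen], hhead⟩
    · exact ⟨[], a :: u, b :: v, rfl, rfl, by simp [commonPrefixLength, h], by simpa using h⟩

end CommonPrefix

section FreeGroupNorm

variable {α : Type*}

theorem isReduced_of_nodup_letters {w : List (α × Bool)} (hw : (w.map Prod.fst).Nodup) :
    FreeGroup.IsReduced w :=
  (List.pairwise_map.1 hw).isChain.imp fun _ _ hne heq => absurd heq hne

theorem isReduced_invRev_append {u v : List (α × Bool)} (hu : FreeGroup.IsReduced u)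
    (hv : FreeGroup.IsReduced v) (hhead : ∀ a ∈ u.head?, ∀ b ∈ v.head?, a ≠ b) :
    FreeGroup.IsReduced (FreeGroup.invRev u ++ v) := by
  classical
  have hinv : FreeGroup.IsReduced (FreeGroup.invRev u) := by
    rw [FreeGroup.isReduced_iff_reduce_eq, FreeGroup.reduce_invRev, hu.reduce_eq]
  refine List.isChain_append.2 ⟨hinv, hv, ?_⟩
  rcases u with _ | ⟨c, u⟩
  · simp [FreeGroup.invRev]
  rintro a ha ⟨b, y⟩ hb (rfl : a.1 = b)
  obtain rfl : (c.1, !c.2) = a := by simpa [FreeGroup.invRev] using ha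
  have hne : c.2 ≠ y := fun h => hhead c (by simp) _ hb (Prod.ext rfl h)
  revert hne
  cases c.2 <;> cases y <;> simp

variable [DecidableEq α]

theorem norm_mk_of_isReduced {w : List (α × Bool)} (hw : FreeGroup.IsReduced w) :
    (FreeGroup.mk w).norm = w.length := by
  rw [FreeGroup.norm, FreeGroup.toWord_mk, hw.reduce_eq]

theorem norm_inv_mul_add_commonPrefixLength (x y : FreeGroup α) :
    (x⁻¹ * y).norm + 2 * commonPrefixLength x.toWord y.toWord = x.norm + y.norm := by
  obtain ⟨p, u, v, hxw, hyw, hlen, hhead⟩ := exists_eq_append_commonPrefixLength x.toWord y.toWord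
  have hx : x = FreeGroup.mk p * FreeGroup.mk u := by
    rw [FreeGroup.mul_mk, ← hxw, FreeGroup.mk_toWord]
  have hy : y = FreeGroup.mk p * FreeGroup.mk v := by
    rw [FreeGroup.mul_mk, ← hyw, FreeGroup.mk_toWord]
  have hxy : x⁻¹ * y = FreeGroup.mk (FreeGroup.invRev u ++ v) := by
    rw [← FreeGroup.mul_mk, ← FreeGroup.inv_mk, hx, hy]
    group
  have hpu : FreeGroup.IsReduced (p ++ u) := hxw ▸ FreeGroup.isReduced_toWord
  have hpv : FreeGroup.IsReduced (p ++ v) := hyw ▸ FreeGroup.isReduced_toWord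
  have hred := isReduced_invRev_append (List.isChain_append.1 hpu).2.1
    (List.isChain_append.1 hpv).2.1 hhead
  rw [hxy, norm_mk_of_isReduced hred, ← hlen]
  simp only [FreeGroup.norm, hxw, hyw, List.length_append, FreeGroup.invRev_length]
  omega

-- Zero-hyperbolicity of the Cayley tree, for the four points `1`, `x`, `y`, `z`.
theorem norm_add_norm_inv_mul_le_max (x y z : FreeGroup α) :
    y.norm + (x⁻¹ * z).norm ≤ max (x.norm + (y⁻¹ * z).norm) (z.norm + (x⁻¹ * y).norm) := by
  have hxy := norm_inv_mul_add_commonPrefixLength x y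
  have hyz := norm_inv_mul_add_commonPrefixLength y z
  have hxz := norm_inv_mul_add_commonPrefixLength x z
  have := min_commonPrefixLength_le x.toWord y.toWord z.toWord
  omega

theorem norm_lt_norm_mul_prod {p a : FreeGroup α} {l : List (FreeGroup α)}
    (hpa : p.norm < (p * a).norm)
    (hl : (a :: l).IsChain fun c d => max c.norm d.norm < (c * d).norm) :
    p.norm < (p * (a :: l).prod).norm := by
  induction l generalizing p a with
  | nil => simpa using hpa
  | cons b l ih =>
    obtain ⟨hab, hl⟩ := List.isChain_cons_cons.1 hl
    have hfour := norm_add_norm_inv_mul_le_max p (p * a) (p * a * b)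
    rw [show p⁻¹ * (p * a * b) = a * b by group, inv_mul_cancel_left, inv_mul_cancel_left] at hfour
    have hpab : (p * a).norm < (p * a * b).norm := by omega
    calc p.norm < (p * a).norm := hpa
      _ < (p * a * (b :: l).prod).norm := ih hpab hl
      _ = (p * (a :: b :: l).prod).norm := by rw [List.prod_cons (a := a), mul_assoc]

theorem exists_adjacent_norm_mul_le {us : List (FreeGroup α)} (hprod : us.prod = 1)
    (hlen : 2 ≤ us.length) :
    ∃ X a b Y, us = X ++ a :: b :: Y ∧ (a * b).norm ≤ max a.norm b.norm := by
  by_contra! hgrow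
  have hchain : us.IsChain fun c d => max c.norm d.norm < (c * d).norm :=
    List.isChain_iff_forall_rel_of_append_cons_cons.2 fun a b X Y h => hgrow X a b Y h
  obtain ⟨a, b, l, rfl⟩ : ∃ a b l, us = a :: b :: l := by
    match us, hlen with
    | a :: b :: l, _ => exact ⟨a, b, l, rfl⟩
  have hab := (List.isChain_cons_cons.1 hchain).1
  have ha : (1 : FreeGroup α).norm < (1 * a).norm := by
    rw [one_mul, FreeGroup.norm_one, pos_iff_ne_zero, Ne, FreeGroup.norm_eq_zero]
    rintro rfl
    simp at hab
  simpa [hprod] using norm_lt_norm_mul_prod ha hchain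

theorem exists_infix_norm_prod_le {m : ℕ} {us : List (FreeGroup α)} (hlen : 3 ≤ us.length)
    (hnorm : ∀ u ∈ us, u.norm ≤ m) (hprod : us.prod.norm ≤ m) :
    ∃ X M Y, us = X ++ M ++ Y ∧ 2 ≤ M.length ∧ M.length < us.length ∧ M.prod.norm ≤ m := by
  obtain ⟨X, a, b, Y, hsplit, hab⟩ :=
    exists_adjacent_norm_mul_le (us := us ++ [us.prod⁻¹]) (by simp) (by simp; omega)
  have hle : ∀ u ∈ us ++ [us.prod⁻¹], u.norm ≤ m := by
    simpa [or_imp, forall_and] using ⟨hnorm, hprod⟩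
  have hab : (a * b).norm ≤ m := hab.trans
    (max_le (hle a (by simp [hsplit])) (hle b (by simp [hsplit])))
  rcases List.eq_nil_or_concat' Y with rfl | ⟨Y, c, rfl⟩
  · obtain ⟨rfl, hb⟩ := List.append_inj' (s₁ := us) (t₁ := [us.prod⁻¹]) (s₂ := X ++ [a])
      (t₂ := [b]) (by simpa using hsplit) rfl
    refine ⟨[], X, [a], by simp, by simpa using hlen, by simp, ?_⟩
    obtain rfl : (X ++ [a]).prod⁻¹ = b := by simpa using hb
    simpa using hab
  · obtain ⟨rfl, -⟩ := List.append_inj' (s₁ := us) (t₁ := [us.prod⁻¹])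
      (s₂ := X ++ a :: b :: Y) (t₂ := [c]) (by simpa using hsplit) rfl
    exact ⟨X, [a, b], Y, by simp, by simp, by simp at hlen ⊢; omega, by simpa using hab⟩

end FreeGroupNorm

section Labelled

/-- Types of L◇ whose primitive occurrences and modalities carry labels, so that the two ends of
an axiom link can be told apart from all other occurrences. The two brackets created by one
modality share its label. -/
inductive LTy where
  | prim : ℕ → ℕ → LTy
  | ldiv : LTy → LTy → LTy
  | rdiv : LTy → LTy → LTy
  | mul : LTy → LTy → LTy
  | dia : ℕ → LTy → LTy
  | box : ℕ → LTy → LTy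

/-- Type trees over labelled types; the bracket pairs are labelled as well. -/
inductive LTree where
  | leaf : LTy → LTree
  | node : ℕ → List LTree → LTree

/-- Labelled hedges. -/
abbrev LHedge := List LTree

/-- Labelled hedges with one hole. -/
inductive LCtx where
  | hole : LHedge → LHedge → LCtx
  | brk : ℕ → LCtx → LHedge → LHedge → LCtx

/-- Generators of the free group in which sequents are interpreted: labelled primitive types and
labelled opening and closing brackets. -/
inductive Letter where
  | prim : ℕ → ℕ → Letter
  | opn : ℕ → Letter
  | cls : ℕ → Letter
deriving DecidableEq

/-- The label of a generator. -/
def Letter.label : Letter → ℕ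
  | .prim _ k => k
  | .opn k => k
  | .cls k => k

/-- Substitution of a labelled hedge for the hole. -/
def LCtx.plug : LCtx → LHedge → LHedge
  | .hole pre post, X => pre ++ X ++ post
  | .brk k D pre post, X => pre ++ (LTree.node k (D.plug X) :: post)

/-- Substitution of a context for the hole. -/
def LCtx.comp : LCtx → LCtx → LCtx
  | .hole pre post, .hole pre' post' => .hole (pre ++ pre') (post' ++ post)
  | .hole pre post, .brk k E pre' post' => .brk k E (pre ++ pre') (post' ++ post)
  | .brk k D pre post, E => .brk k (D.comp E) pre post

/-- Forgetting the labels of a type. -/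
def LTy.erase : LTy → PTy
  | .prim p _ => .prim p
  | .ldiv A B => .ldiv A.erase B.erase
  | .rdiv B A => .rdiv B.erase A.erase
  | .mul A B => .mul A.erase B.erase
  | .dia _ A => .dia A.erase
  | .box _ A => .box A.erase

mutual
/-- Forgetting the labels of a tree. -/
def eraseTree : LTree → PTree
  | .leaf A => .leaf A.erase
  | .node _ ts => .node (eraseHedge ts)
/-- Forgetting the labels of a hedge. -/
def eraseHedge : List LTree → List PTree
  | [] => []
  | t :: ts => eraseTree t :: eraseHedge ts
end

/-- Forgetting the labels of a context. -/
def LCtx.erase : LCtx → PCtx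
  | .hole pre post => .hole (eraseHedge pre) (eraseHedge post)
  | .brk _ D pre post => .brk D.erase (eraseHedge pre) (eraseHedge post)

/-- The word interpreting a type in the free group: divisions become quotients, `◇` conjoins the
two bracket letters and `□↓` conjoins their inverses. -/
def LTy.word : LTy → List (Letter × Bool)
  | .prim p k => [(.prim p k, true)]
  | .ldiv A B => FreeGroup.invRev A.word ++ B.word
  | .rdiv B A => B.word ++ FreeGroup.invRev A.word
  | .mul A B => A.word ++ B.word
  | .dia k A => (.opn k, true) :: A.word ++ [(.cls k, true)]
  | .box k A => (.opn k, false) :: A.word ++ [(.cls k, false)]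

mutual
/-- The word interpreting a tree. -/
def treeWord : LTree → List (Letter × Bool)
  | .leaf A => A.word
  | .node k ts => (.opn k, true) :: hedgeWord ts ++ [(.cls k, true)]
/-- The word interpreting a hedge. -/
def hedgeWord : List LTree → List (Letter × Bool)
  | [] => []
  | t :: ts => treeWord t ++ hedgeWord ts
end

/-- The word of a context, its hole being left empty. -/
def LCtx.word (D : LCtx) : List (Letter × Bool) := hedgeWord (D.plug [])

/-- Number of occurrences of a letter in a word, of either sign. -/
def occ (g : Letter) (w : List (Letter × Bool)) : ℕ := (w.map Prod.fst).count g

attribute [simp] LTy.erase eraseTree eraseHedge LTy.word treeWord hedgeWord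

@[simp]
theorem eraseHedge_append (G H : LHedge) :
    eraseHedge (G ++ H) = eraseHedge G ++ eraseHedge H := by
  induction G with
  | nil => rfl
  | cons t G ih => simp [ih]

@[simp]
theorem eraseHedge_map_leaf (L : List LTy) :
    eraseHedge (L.map .leaf) = (L.map LTy.erase).map .leaf := by
  induction L with
  | nil => rfl
  | cons A L ih => simp [ih]

@[simp]
theorem eraseHedge_eq_nil {H : LHedge} : eraseHedge H = [] ↔ H = [] := by
  cases H <;> simp

@[simp]
theorem eraseHedge_plug (D : LCtx) (X : LHedge) :
    eraseHedge (D.plug X) = D.erase.plug (eraseHedge X) := by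
  induction D with
  | hole pre post => simp [LCtx.plug, LCtx.erase, PCtx.plug]
  | brk k D pre post ih => simp [LCtx.plug, LCtx.erase, PCtx.plug, ih]

@[simp]
theorem hedgeWord_append (G H : LHedge) : hedgeWord (G ++ H) = hedgeWord G ++ hedgeWord H := by
  induction G with
  | nil => rfl
  | cons t G ih => simp [ih]

theorem LCtx.exists_hedgeWord_plug (D : LCtx) :
    ∃ l r, ∀ X, hedgeWord (D.plug X) = l ++ hedgeWord X ++ r := by
  induction D with
  | hole pre post => exact ⟨hedgeWord pre, hedgeWord post, fun X => by simp [plug]⟩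
  | brk k D pre post ih =>
    obtain ⟨l, r, h⟩ := ih
    exact ⟨hedgeWord pre ++ (.opn k, true) :: l, r ++ (.cls k, true) :: hedgeWord post,
      fun X => by simp [plug, h]⟩

theorem LTy.length_word (A : LTy) : A.word.length = lenP A.erase := by
  induction A <;> simp_all [lenP]

@[simp]
theorem LCtx.plug_comp (D E : LCtx) (X : LHedge) : (D.comp E).plug X = D.plug (E.plug X) := by
  induction D with
  | hole pre post => cases E <;> simp [comp, plug]
  | brk k D pre post ih => simp [comp, plug, ih]

theorem LCtx.comp_assoc (D E F : LCtx) : (D.comp E).comp F = D.comp (E.comp F) := by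
  induction D with
  | hole pre post => cases E <;> cases F <;> simp [comp]
  | brk k D pre post ih => simp [comp, ih]

@[simp]
theorem LCtx.comp_hole_nil_nil (D : LCtx) : D.comp (.hole [] []) = D := by
  induction D with
  | hole pre post => simp [comp]
  | brk k D pre post ih => simp [comp, ih]

@[simp]
theorem LCtx.hole_nil_nil_comp (D : LCtx) : (LCtx.hole [] []).comp D = D := by
  cases D <;> simp [comp]

theorem LCtx.plug_ne_nil (D : LCtx) {X : LHedge} (hX : X ≠ []) : D.plug X ≠ [] := by
  cases D <;> simp [plug, hX]

@[simp]
theorem occ_nil (g : Letter) : occ g [] = 0 := rfl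

@[simp]
theorem occ_cons (g : Letter) (a : Letter × Bool) (w : List (Letter × Bool)) :
    occ g (a :: w) = occ g w + if a.1 = g then 1 else 0 := by
  simp [occ, List.count_cons]

@[simp]
theorem occ_append (g : Letter) (v w : List (Letter × Bool)) :
    occ g (v ++ w) = occ g v + occ g w := by
  simp [occ]

@[simp]
theorem occ_invRev (g : Letter) (w : List (Letter × Bool)) :
    occ g (FreeGroup.invRev w) = occ g w := by
  simp [occ, FreeGroup.invRev, Function.comp_def]

@[simp]
theorem occ_hedgeWord_plug (g : Letter) (D : LCtx) (X : LHedge) :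
    occ g (hedgeWord (D.plug X)) = occ g D.word + occ g (hedgeWord X) := by
  obtain ⟨l, r, h⟩ := D.exists_hedgeWord_plug
  simp only [LCtx.word, h, occ_append, hedgeWord, occ_nil]
  omega

@[simp]
theorem LCtx.word_hole (pre post : LHedge) :
    (LCtx.hole pre post).word = hedgeWord pre ++ hedgeWord post := by
  simp [word, plug]

theorem LCtx.word_brk (k : ℕ) (D : LCtx) (pre post : LHedge) :
    (LCtx.brk k D pre post).word =
      hedgeWord pre ++ (.opn k, true) :: D.word ++ (.cls k, true) :: hedgeWord post := by
  simp [word, plug]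

@[simp]
theorem occ_word_comp (g : Letter) (D E : LCtx) :
    occ g (D.comp E).word = occ g D.word + occ g E.word := by
  rw [LCtx.word, LCtx.plug_comp, occ_hedgeWord_plug]
  rfl

attribute [grind =] LTy.word treeWord hedgeWord hedgeWord_append occ_cons occ_append occ_invRev
  occ_hedgeWord_plug LCtx.word_hole LCtx.word_brk occ_word_comp

theorem LTy.over_erase_iff {B : Finset ℕ} {A : LTy} :
    A.erase.over B ↔ ∀ p k, 0 < occ (.prim p k) A.word → p ∈ B := by
  induction A with
  | prim q l => simp [PTy.over, pos_iff_ne_zero]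
  | ldiv A C ihA ihC | rdiv A C ihA ihC | mul A C ihA ihC =>
    simp only [erase, PTy.over, ihA, ihC, word, occ_append, occ_invRev, add_pos_iff, or_imp,
      forall_and]
  | dia l A ih | box l A ih => simpa [PTy.over] using ih

end Labelled

section LabelledCalculus

/-- The cut-free labelled calculus. An axiom and the two ends of a modality share their label. -/
inductive LProv : LHedge → LTy → Prop where
  | id (p k) : LProv [.leaf (.prim p k)] (.prim p k)
  | ldivL (G : LHedge) (D : LCtx) (A B C) :
      LProv G A → LProv (D.plug [.leaf B]) C → LProv (D.plug (G ++ [.leaf (.ldiv A B)])) C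
  | ldivR (H : LHedge) (A B) : H ≠ [] → LProv (.leaf A :: H) B → LProv H (.ldiv A B)
  | rdivL (G : LHedge) (D : LCtx) (A B C) :
      LProv G A → LProv (D.plug [.leaf B]) C → LProv (D.plug (.leaf (.rdiv B A) :: G)) C
  | rdivR (H : LHedge) (A B) : H ≠ [] → LProv (H ++ [.leaf A]) B → LProv H (.rdiv B A)
  | mulL (D : LCtx) (A B C) :
      LProv (D.plug [.leaf A, .leaf B]) C → LProv (D.plug [.leaf (.mul A B)]) C
  | mulR (G H : LHedge) (A B) : LProv G A → LProv H B → LProv (G ++ H) (.mul A B)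
  | diaL (k) (D : LCtx) (A C) :
      LProv (D.plug [.node k [.leaf A]]) C → LProv (D.plug [.leaf (.dia k A)]) C
  | diaR (k) (G : LHedge) (A) : LProv G A → LProv [.node k G] (.dia k A)
  | boxL (k) (D : LCtx) (A C) :
      LProv (D.plug [.leaf A]) C → LProv (D.plug [.node k [.leaf (.box k A)]]) C
  | boxR (k) (G : LHedge) (A) : G ≠ [] → LProv [.node k G] A → LProv G (.box k A)

theorem mk_hedgeWord_plug_congr (D : LCtx) {X Y : LHedge}
    (hXY : FreeGroup.mk (hedgeWord X) = FreeGroup.mk (hedgeWord Y)) :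
    FreeGroup.mk (hedgeWord (D.plug X)) = FreeGroup.mk (hedgeWord (D.plug Y)) := by
  obtain ⟨l, r, h⟩ := D.exists_hedgeWord_plug
  simp only [h, ← FreeGroup.mul_mk, hXY]

theorem mk_cons_true (a : Letter) (w : List (Letter × Bool)) :
    FreeGroup.mk ((a, true) :: w) = FreeGroup.of a * FreeGroup.mk w := by
  rw [FreeGroup.of, FreeGroup.mul_mk, List.singleton_append]

theorem mk_cons_false (a : Letter) (w : List (Letter × Bool)) :
    FreeGroup.mk ((a, false) :: w) = (FreeGroup.of a)⁻¹ * FreeGroup.mk w := by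
  rw [FreeGroup.of, FreeGroup.inv_mk, FreeGroup.mul_mk]
  rfl

namespace LProv

variable {H : LHedge} {A : LTy}

theorem ne_nil (h : LProv H A) : H ≠ [] := by
  induction h with
  | id | diaR => simp
  | ldivR _ _ _ hH | rdivR _ _ _ hH | boxR _ _ _ hH => exact hH
  | mulR _ _ _ _ _ _ ihG => simp [ihG]
  | ldivL | rdivL | mulL | diaL | boxL => exact LCtx.plug_ne_nil _ (by simp)

theorem prov_erase (h : LProv H A) : PProv (eraseHedge H) A.erase := by
  induction h with
  | id p _ => exact .id p
  | ldivL G D A B C _ _ ihA ihC =>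
    simpa using PProv.ldivL _ _ _ _ _ ihA (by simpa using ihC)
  | ldivR H A B hH _ ih => exact .ldivR _ _ _ (by simpa) ih
  | rdivL G D A B C _ _ ihA ihC =>
    simpa using PProv.rdivL _ _ _ _ _ ihA (by simpa using ihC)
  | rdivR H A B hH _ ih => exact .rdivR _ _ _ (by simpa) (by simpa using ih)
  | mulL D A B C _ ih =>
    simpa using PProv.mulL _ _ _ _ (by simpa using ih)
  | mulR G H A B _ _ ihA ihB => simpa using PProv.mulR _ _ _ _ ihA ihB
  | diaL k D A C _ ih =>
    simpa using PProv.diaL _ _ _ (by simpa using ih)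
  | diaR _ G A _ ih => exact .diaR _ _ ih
  | boxL k D A C _ ih =>
    simpa using PProv.boxL _ _ _ (by simpa using ih)
  | boxR _ G A _ _ ih => exact .boxR _ _ ih

theorem mk_hedgeWord (h : LProv H A) :
    FreeGroup.mk (hedgeWord H) = FreeGroup.mk A.word := by
  have mk_nil : FreeGroup.mk ([] : List (Letter × Bool)) = 1 := rfl
  induction h with
  | id => simp
  | ldivL G D A B C _ _ ihA ihC =>
    refine (mk_hedgeWord_plug_congr D ?_).trans ihC
    simp [← FreeGroup.mul_mk, ← FreeGroup.inv_mk, ihA]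
  | rdivL G D A B C _ _ ihA ihC =>
    refine (mk_hedgeWord_plug_congr D ?_).trans ihC
    simp [← FreeGroup.mul_mk, ← FreeGroup.inv_mk, ihA]
  | ldivR H A B _ _ ih =>
    rw [LTy.word, ← FreeGroup.mul_mk, ← ih]
    simp [← FreeGroup.inv_mk, ← FreeGroup.mul_mk]
  | rdivR H A B _ _ ih =>
    rw [LTy.word, ← FreeGroup.mul_mk, ← ih]
    simp [← FreeGroup.inv_mk, ← FreeGroup.mul_mk]
  | mulL D A B C _ ih =>
    refine (mk_hedgeWord_plug_congr D ?_).trans ih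
    simp
  | mulR G H A B _ _ ihA ihB =>
    simp [← FreeGroup.mul_mk, ihA, ihB]
  | diaL k D A C _ ih =>
    refine (mk_hedgeWord_plug_congr D ?_).trans ih
    simp
  | diaR k G A _ ih =>
    simp [mk_cons_true, ← FreeGroup.mul_mk, ih]
  | boxL k D A C _ ih =>
    refine (mk_hedgeWord_plug_congr D ?_).trans ih
    simp [mk_cons_true, mk_cons_false, ← FreeGroup.mul_mk, mk_nil]
  | boxR k G A _ _ ih =>
    rw [LTy.word, List.cons_append, mk_cons_false, ← FreeGroup.mul_mk, ← ih]
    simp [mk_cons_true, mk_cons_false, ← FreeGroup.mul_mk, mk_nil, mul_assoc]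

end LProv

end LabelledCalculus

section Splitting

/-- The relative positions of two occurrences `D₁.plug X₁ = D₂.plug X₂` of hedges in one hedge.
For disjoint occurrences, `F₁` (resp. `F₂`) takes the contents of the second (resp. first) place
to the context of the first (resp. second). -/
inductive Position : LCtx → LHedge → LCtx → LHedge → Prop where
  | inside (D E : LCtx) (X : LHedge) : Position (D.comp E) X D (E.plug X)
  | contains (D E : LCtx) (X : LHedge) : Position D (E.plug X) (D.comp E) X
  | disjoint (F₁ F₂ : LHedge → LCtx) (X₁ X₂ : LHedge)
      (hF : ∀ Y₁ Y₂, (F₁ Y₂).plug Y₁ = (F₂ Y₁).plug Y₂) : Position (F₁ X₂) X₁ (F₂ X₁) X₂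
  | overlapLeft (D : LCtx) (U V W : LHedge) (hU : U ≠ []) (hV : V ≠ []) (hW : W ≠ []) :
      Position (D.comp (.hole [] W)) (U ++ V) (D.comp (.hole U [])) (V ++ W)
  | overlapRight (D : LCtx) (U V W : LHedge) (hU : U ≠ []) (hV : V ≠ []) (hW : W ≠ []) :
      Position (D.comp (.hole U [])) (V ++ W) (D.comp (.hole [] W)) (U ++ V)

namespace Position

variable {D₁ D₂ : LCtx} {X₁ X₂ : LHedge}

theorem symm (h : Position D₁ X₁ D₂ X₂) : Position D₂ X₂ D₁ X₁ := by
  cases h with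
  | inside => exact contains ..
  | contains => exact inside ..
  | disjoint F₁ F₂ _ _ hF => exact disjoint F₂ F₁ _ _ fun Y₁ Y₂ => (hF Y₂ Y₁).symm
  | overlapLeft _ _ _ _ hU hV hW => exact overlapRight _ _ _ _ hU hV hW
  | overlapRight _ _ _ _ hU hV hW => exact overlapLeft _ _ _ _ hU hV hW

theorem comp_left (h : Position D₁ X₁ D₂ X₂) (D : LCtx) :
    Position (D.comp D₁) X₁ (D.comp D₂) X₂ := by
  cases h with
  | inside => rw [← LCtx.comp_assoc]; exact inside ..
  | contains => rw [← LCtx.comp_assoc]; exact contains ..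
  | disjoint F₁ F₂ _ _ hF =>
    exact disjoint (fun Y => D.comp (F₁ Y)) (fun Y => D.comp (F₂ Y)) _ _ fun Y₁ Y₂ => by
      rw [LCtx.plug_comp, LCtx.plug_comp, hF]
  | overlapLeft _ _ _ _ hU hV hW =>
    simpa only [LCtx.comp_assoc] using overlapLeft (D.comp _) _ _ _ hU hV hW
  | overlapRight _ _ _ _ hU hV hW =>
    simpa only [LCtx.comp_assoc] using overlapRight (D.comp _) _ _ _ hU hV hW

theorem of_hole_hole {a u b d : LHedge} (h : X₁ ++ b = u ++ (X₂ ++ d)) :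
    Position (.hole a b) X₁ (.hole (a ++ u) d) X₂ := by
  rcases List.append_eq_append_iff.1 h with ⟨v, rfl, rfl⟩ | ⟨v, rfl, hv⟩
  · exact disjoint (fun Y => .hole a (v ++ (Y ++ d))) (fun Y => .hole (a ++ (Y ++ v)) d) _ _
      fun _ _ => by simp [LCtx.plug]
  rcases List.append_eq_append_iff.1 hv with ⟨w, rfl, rfl⟩ | ⟨w, rfl, rfl⟩
  · simpa [LCtx.comp, LCtx.plug] using contains (.hole a b) (.hole u w) X₂
  by_cases hu : u = []
  · simpa [hu, LCtx.comp, LCtx.plug] using inside (.hole a d) (.hole [] w) v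
  by_cases hv : v = []
  · simpa [hv] using disjoint (fun Y => .hole a (Y ++ d)) (fun Y => .hole (a ++ Y) d) u w
      fun _ _ => by simp [LCtx.plug]
  by_cases hw : w = []
  · simpa [hw, LCtx.comp, LCtx.plug] using contains (.hole a d) (.hole u []) v
  simpa [LCtx.comp] using overlapLeft (.hole a d) u v w hu hv hw

theorem of_hole_brk {a b c d : LHedge} {k : ℕ} {D : LCtx}
    (h : a ++ (X₁ ++ b) = c ++ .node k (D.plug X₂) :: d) :
    Position (.hole a b) X₁ (.brk k D c d) X₂ := by
  rcases List.append_eq_append_iff.1 h with ⟨u, rfl, hu⟩ | ⟨u, rfl, hu⟩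
  · rcases List.append_eq_append_iff.1 hu with ⟨v, rfl, rfl⟩ | ⟨v, rfl, hv⟩
    · exact disjoint (fun Y => .hole a (v ++ .node k (D.plug Y) :: d))
        (fun Y => .brk k D (a ++ (Y ++ v)) d) _ _ fun _ _ => by simp [LCtx.plug]
    · rcases List.cons_eq_append_iff.1 hv with ⟨rfl, rfl⟩ | ⟨v, rfl, rfl⟩
      · simpa using disjoint (fun Y => .hole a (.node k (D.plug Y) :: d))
          (fun Y => .brk k D (a ++ Y) d) u X₂ fun _ _ => by simp [LCtx.plug]
      · exact contains (.hole a b) (.brk k D u v) X₂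
  · rcases List.cons_eq_append_iff.1 hu with ⟨rfl, hX⟩ | ⟨u, rfl, rfl⟩
    · rcases List.append_eq_cons_iff.1 hX with ⟨rfl, rfl⟩ | ⟨v, rfl, rfl⟩
      · simpa using disjoint (fun Y => .hole c (.node k (D.plug Y) :: d))
          (fun Y => .brk k D (c ++ Y) d) [] X₂ fun _ _ => by simp [LCtx.plug]
      · simpa [LCtx.comp, LCtx.plug] using contains (.hole c b) (.brk k D [] v) X₂
    · exact disjoint (fun Y => .hole (c ++ .node k (D.plug Y) :: u) b)
        (fun Y => .brk k D c (u ++ (Y ++ b))) _ _ fun _ _ => by simp [LCtx.plug]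

theorem of_brk_brk {a b u d : LHedge} {k l : ℕ}
    (hD : D₁.plug X₁ = D₂.plug X₂ → Position D₁ X₁ D₂ X₂)
    (h : .node k (D₁.plug X₁) :: b = u ++ .node l (D₂.plug X₂) :: d) :
    Position (.brk k D₁ a b) X₁ (.brk l D₂ (a ++ u) d) X₂ := by
  rcases List.cons_eq_append_iff.1 h with ⟨rfl, hcons⟩ | ⟨u, rfl, rfl⟩
  · obtain ⟨⟨rfl, hplug⟩, rfl⟩ : (l = k ∧ D₂.plug X₂ = D₁.plug X₁) ∧ d = b := by simpa using hcons
    simpa [LCtx.comp] using (hD hplug.symm).comp_left (.brk l (.hole [] []) a d)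
  · exact disjoint (fun Y => .brk k D₁ a (u ++ .node l (D₂.plug Y) :: d))
      (fun Y => .brk l D₂ (a ++ .node k (D₁.plug Y) :: u) d) _ _ fun _ _ => by simp [LCtx.plug]

theorem of_plug_eq_plug (h : D₁.plug X₁ = D₂.plug X₂) : Position D₁ X₁ D₂ X₂ := by
  induction D₁ generalizing D₂ with
  | hole a b =>
    cases D₂ with
    | hole c d =>
      simp only [LCtx.plug, List.append_assoc] at h
      rcases List.append_eq_append_iff.1 h with ⟨u, rfl, hu⟩ | ⟨u, rfl, hu⟩
      · exact of_hole_hole hu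
      · exact (of_hole_hole hu).symm
    | brk k D c d => exact of_hole_brk (by simpa [LCtx.plug] using h)
  | brk k D a b ih =>
    cases D₂ with
    | hole c d => exact (of_hole_brk (by simpa [LCtx.plug] using h.symm)).symm
    | brk l E c d =>
      rcases List.append_eq_append_iff.1 h with ⟨u, rfl, hu⟩ | ⟨u, rfl, hu⟩
      · exact of_brk_brk ih hu
      · exact (of_brk_brk (fun hE => (ih hE.symm).symm) hu).symm

end Position

theorem LCtx.plug_eq_append {D : LCtx} {Q G H : LHedge} (h : D.plug Q = G ++ H) (hQ : Q ≠ []) :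
    (∃ E, G = E.plug Q ∧ D = (LCtx.hole [] H).comp E) ∨
      (∃ E, H = E.plug Q ∧ D = (LCtx.hole G []).comp E) ∨
      ∃ P V W R, V ≠ [] ∧ W ≠ [] ∧ Q = V ++ W ∧ G = P ++ V ∧ H = W ++ R ∧ D = .hole P R := by
  cases D with
  | hole a b =>
    simp only [plug, List.append_assoc] at h
    rcases List.append_eq_append_iff.1 h with ⟨u, rfl, hu⟩ | ⟨u, rfl, rfl⟩
    · rcases List.append_eq_append_iff.1 hu with ⟨v, rfl, rfl⟩ | ⟨v, rfl, rfl⟩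
      · exact .inl ⟨.hole a v, by simp [plug], by simp [comp]⟩
      by_cases hu : u = []
      · exact .inr (.inl ⟨.hole [] b, by simp [plug, hu], by simp [comp, hu]⟩)
      by_cases hv : v = []
      · exact .inl ⟨.hole a [], by simp [plug, hv], by simp [comp, hv]⟩
      exact .inr (.inr ⟨a, u, v, b, hu, hv, rfl, rfl, rfl, rfl⟩)
    · exact .inr (.inl ⟨.hole u b, by simp [plug], by simp [comp]⟩)
  | brk k D a b =>
    rcases List.append_eq_append_iff.1 h with ⟨u, rfl, hu⟩ | ⟨u, rfl, rfl⟩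
    · rcases List.cons_eq_append_iff.1 hu with ⟨rfl, rfl⟩ | ⟨u, rfl, rfl⟩
      · exact .inr (.inl ⟨.brk k D [] b, by simp [plug], by simp [comp]⟩)
      · exact .inl ⟨.brk k D a u, by simp [plug], by simp [comp]⟩
    · exact .inr (.inl ⟨.brk k D u b, by simp [plug], by simp [comp]⟩)

end Splitting

section Interpolation

/-- `E` interpolates the part `Q` of the sequent `D.plug Q ⇒ C` if it can be cut in for `Q` and
none of its letters occurs more often than in `Q`, nor more often than in the rest of the
sequent. -/
structure IsInterpolant (D : LCtx) (Q : LHedge) (C E : LTy) : Prop where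
  left : LProv Q E
  right : LProv (D.plug [.leaf E]) C
  occ_le_left (g : Letter) : occ g E.word ≤ occ g (hedgeWord Q)
  occ_le_right (g : Letter) : occ g E.word ≤ occ g D.word + occ g C.word

/-- Every nonempty part of the antecedent has an interpolant. -/
def Interpolable (H : LHedge) (C : LTy) : Prop :=
  ∀ D Q, H = D.plug Q → Q ≠ [] → ∃ E, IsInterpolant D Q C E

theorem singleton_leaf_eq_plug {A : LTy} {E : LCtx} {Q : LHedge} (h : [.leaf A] = E.plug Q)
    (hQ : Q ≠ []) : E = .hole [] [] ∧ Q = [.leaf A] := by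
  cases E with
  | hole a b =>
    rcases a with _ | ⟨t, a⟩
    · rcases Q with _ | ⟨s, Q⟩
      · exact absurd rfl hQ
      · simp_all [LCtx.plug]
    · simp_all [LCtx.plug]
  | brk k D a b => rcases a with _ | ⟨t, a⟩ <;> simp [LCtx.plug] at h

theorem singleton_node_eq_plug {k : ℕ} {G : LHedge} {E : LCtx} {Q : LHedge}
    (h : [.node k G] = E.plug Q) (hQ : Q ≠ []) :
    (E = .hole [] [] ∧ Q = [.node k G]) ∨ ∃ F, E = .brk k F [] [] ∧ G = F.plug Q := by
  cases E with
  | hole a b =>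
    rcases a with _ | ⟨t, a⟩
    · rcases Q with _ | ⟨s, Q⟩
      · exact absurd rfl hQ
      · simp_all [LCtx.plug]
    · simp_all [LCtx.plug]
  | brk l F a b =>
    rcases a with _ | ⟨t, a⟩
    · obtain ⟨⟨rfl, rfl⟩, rfl⟩ : (k = l ∧ G = F.plug Q) ∧ b = [] := by simpa [LCtx.plug] using h
      exact .inr ⟨F, rfl, rfl⟩
    · simp [LCtx.plug] at h

theorem concat_eq_append {α : Type*} {G U V : List α} {x : α} (h : G ++ [x] = U ++ V)
    (hV : V ≠ []) : ∃ W, V = W ++ [x] ∧ G = U ++ W := by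
  obtain rfl | ⟨W, y, rfl⟩ := List.eq_nil_or_concat' V
  · exact absurd rfl hV
  · obtain ⟨rfl, hxy⟩ := List.append_inj' (h.trans (List.append_assoc ..).symm) rfl
    exact ⟨W, by rw [hxy], rfl⟩

variable {A B C F : LTy} {D : LCtx} {G H K K' P Q U V W Z : LHedge}

theorem IsInterpolant.expand_plug {E : LCtx}
    (rule : ∀ D : LCtx, ∀ C : LTy, LProv (D.plug K') C → LProv (D.plug K) C)
    (hocc : ∀ g, occ g (hedgeWord K') ≤ occ g (hedgeWord K))
    (hF : IsInterpolant D (E.plug K') C F) : IsInterpolant D (E.plug K) C F := by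
  refine ⟨rule _ _ hF.left, hF.right, fun g => ?_, hF.occ_le_right⟩
  grind [hocc g, hF.occ_le_left g]

namespace Interpolable

-- A left rule replacing `K'` by `K` preserves interpolability as soon as interpolants are found
-- for the parts that meet `K` without containing it.
theorem of_left_rule (hC : Interpolable (D.plug K') C) (hK' : K' ≠ [])
    (rule : ∀ D : LCtx, ∀ C : LTy, LProv (D.plug K') C → LProv (D.plug K) C)
    (hocc : ∀ g, occ g (hedgeWord K') ≤ occ g (hedgeWord K))
    (hcontains : ∀ E : LCtx, ∀ Q : LHedge, K = E.plug Q → Q ≠ [] →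
      ∃ F, IsInterpolant (D.comp E) Q C F)
    (hleft : ∀ D' : LCtx, ∀ U V W : LHedge, U ≠ [] → V ≠ [] → W ≠ [] → K = U ++ V →
      D = D'.comp (.hole [] W) → ∃ F, IsInterpolant (D'.comp (.hole U [])) (V ++ W) C F)
    (hright : ∀ D' : LCtx, ∀ U V W : LHedge, U ≠ [] → V ≠ [] → W ≠ [] → K = V ++ W →
      D = D'.comp (.hole U []) → ∃ F, IsInterpolant (D'.comp (.hole [] W)) (U ++ V) C F) :
    Interpolable (D.plug K) C := by
  intro D' Q h hQ
  cases Position.of_plug_eq_plug h with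
  | inside _ E =>
    obtain ⟨F, hF⟩ := hC D' (E.plug K') (by simp) (E.plug_ne_nil hK')
    exact ⟨F, hF.expand_plug rule hocc⟩
  | contains _ E => exact hcontains E Q rfl hQ
  | disjoint F₁ F₂ _ _ hF =>
    obtain ⟨F, hF'⟩ := hC (F₂ K') Q (hF _ _) hQ
    refine ⟨F, hF'.left, ?_, hF'.occ_le_left, fun g => ?_⟩
    · rw [← hF]
      exact rule _ _ (hF _ _ ▸ hF'.right)
    · have hword (Y) : occ g (F₂ Y).word = occ g (F₁ []).word + occ g (hedgeWord Y) := by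
        rw [LCtx.word, ← hF, occ_hedgeWord_plug]
      have hK := hocc g
      have hg := hF'.occ_le_right g
      rw [hword] at hg ⊢
      omega
  | overlapLeft D' U V W hU hV hW => exact hleft D' U V W hU hV hW rfl rfl
  | overlapRight D' U V W hU hV hW => exact hright D' U V W hU hV hW rfl rfl

theorem of_singleton_left_rule {t : LTree} (hC : Interpolable (D.plug K') C)
    (hK' : K' ≠ []) (rule : ∀ D : LCtx, ∀ C : LTy, LProv (D.plug K') C → LProv (D.plug [t]) C)
    (hocc : ∀ g, occ g (hedgeWord K') ≤ occ g (treeWord t))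
    (hcontains : ∀ E : LCtx, ∀ Q : LHedge, [t] = E.plug Q → Q ≠ [] → (E = .hole [] [] ∧ Q = [t]) ∨
      ∃ F, IsInterpolant (D.comp E) Q C F) :
    Interpolable (D.plug [t]) C := by
  refine hC.of_left_rule hK' rule (by simpa using hocc) (fun E Q h hQ => ?_) ?_ ?_
  · rcases hcontains E Q h hQ with ⟨rfl, rfl⟩ | hF
    · obtain ⟨F, hF⟩ := hC D K' rfl hK'
      have hK : IsInterpolant D ((LCtx.hole [] []).plug K') C F := by simpa [LCtx.plug] using hF
      exact ⟨F, by simpa [LCtx.plug] using hK.expand_plug rule (by simpa using hocc)⟩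
    · exact hF
  all_goals simp +contextual [List.singleton_eq_append_iff]

theorem id (p k : ℕ) : Interpolable [.leaf (.prim p k)] (.prim p k) := by
  intro D Q h hQ
  obtain ⟨rfl, rfl⟩ := singleton_leaf_eq_plug h hQ
  exact ⟨_, .id p k, .id p k, by simp, by simp⟩

theorem mulL (hC : Interpolable (D.plug [.leaf A, .leaf B]) C) :
    Interpolable (D.plug [.leaf (.mul A B)]) C :=
  hC.of_singleton_left_rule (by simp) (fun D C => .mulL D A B C) (by simp)
    fun _ _ h hQ => .inl (singleton_leaf_eq_plug h hQ)

theorem diaL {k : ℕ} (hC : Interpolable (D.plug [.node k [.leaf A]]) C) :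
    Interpolable (D.plug [.leaf (.dia k A)]) C :=
  hC.of_singleton_left_rule (by simp) (fun D C => .diaL k D A C) (by simp)
    fun _ _ h hQ => .inl (singleton_leaf_eq_plug h hQ)

theorem boxL {k : ℕ} (hC : Interpolable (D.plug [.leaf A]) C) :
    Interpolable (D.plug [.node k [.leaf (.box k A)]]) C := by
  refine hC.of_singleton_left_rule (by simp) (fun D C => .boxL k D A C) (fun g => ?_) ?_
  · grind
  intro E Q h hQ
  refine (singleton_node_eq_plug h hQ).imp_right ?_
  rintro ⟨F, rfl, hF⟩
  obtain ⟨rfl, rfl⟩ := singleton_leaf_eq_plug hF hQ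
  obtain ⟨I, hI⟩ := hC D [.leaf A] rfl (by simp)
  refine ⟨.box k I, .boxR k _ I (by simp) (.boxL k (.hole [] []) A I hI.left), ?_, fun g => ?_,
    fun g => ?_⟩
  · simpa [LCtx.plug] using LProv.boxL k D I C hI.right
  · simpa using hI.occ_le_left g
  · grind [hI.occ_le_right g]

theorem exists_isInterpolant_ldiv (hG : Interpolable (P ++ W) A)
    (hC : Interpolable (D.plug (.leaf B :: Z)) C) (hP : P ≠ []) :
    ∃ F, IsInterpolant (D.comp (.hole P [])) (W ++ .leaf (.ldiv A B) :: Z) C F := by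
  obtain ⟨I, hI⟩ := hG (.hole [] W) P (by simp [LCtx.plug]) hP
  obtain ⟨J, hJ⟩ := hC D (.leaf B :: Z) rfl (by simp)
  refine ⟨.ldiv I J, .ldivR _ _ _ (by simp) ?_, ?_, fun g => ?_, fun g => ?_⟩
  · simpa [LCtx.plug] using LProv.ldivL (.leaf I :: W) (.hole [] Z) A B J
      (by simpa [LCtx.plug] using hI.right) (by simpa [LCtx.plug] using hJ.left)
  · simpa [LCtx.plug] using LProv.ldivL P D I J C hI.left hJ.right
  · grind (ematch := 20) [hI.occ_le_right g, hJ.occ_le_left g]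
  · grind [hI.occ_le_left g, hJ.occ_le_right g]

theorem exists_isInterpolant_mul_ldiv (hG : Interpolable (V ++ W) A)
    (hC : Interpolable (D.plug (U ++ [.leaf B])) C) (hU : U ≠ []) (hV : V ≠ []) :
    ∃ F, IsInterpolant (D.comp (.hole [] (W ++ [.leaf (.ldiv A B)]))) (U ++ V) C F := by
  obtain ⟨I, hI⟩ := hC (D.comp (.hole [] [.leaf B])) U (by simp [LCtx.plug]) hU
  obtain ⟨J, hJ⟩ := hG (.hole [] W) V (by simp [LCtx.plug]) hV
  refine ⟨.mul I J, .mulR _ _ _ _ hI.left hJ.left, .mulL _ _ _ _ ?_, fun g => ?_, fun g => ?_⟩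
  · simpa [LCtx.plug] using LProv.ldivL (.leaf J :: W) (D.comp (.hole [.leaf I] [])) A B C
      (by simpa [LCtx.plug] using hJ.right) (by simpa [LCtx.plug] using hI.right)
  · simpa using add_le_add (hI.occ_le_left g) (hJ.occ_le_left g)
  · grind (ematch := 20) [hI.occ_le_right g, hJ.occ_le_right g]

theorem exists_isInterpolant_rdiv (hG : Interpolable (W ++ P) A)
    (hC : Interpolable (D.plug (Z ++ [.leaf B])) C) (hP : P ≠ []) :
    ∃ F, IsInterpolant (D.comp (.hole [] P)) (Z ++ .leaf (.rdiv B A) :: W) C F := by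
  obtain ⟨I, hI⟩ := hG (.hole W []) P (by simp [LCtx.plug]) hP
  obtain ⟨J, hJ⟩ := hC D (Z ++ [.leaf B]) rfl (by simp)
  refine ⟨.rdiv J I, .rdivR _ _ _ (by simp) ?_, ?_, fun g => ?_, fun g => ?_⟩
  · simpa [LCtx.plug] using LProv.rdivL (W ++ [.leaf I]) (.hole Z []) A B J
      (by simpa [LCtx.plug] using hI.right) (by simpa [LCtx.plug] using hJ.left)
  · simpa [LCtx.plug] using LProv.rdivL P D I J C hI.left hJ.right
  · grind (ematch := 20) [hI.occ_le_right g, hJ.occ_le_left g]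
  · grind [hI.occ_le_left g, hJ.occ_le_right g]

theorem exists_isInterpolant_mul_rdiv (hG : Interpolable (W ++ V) A)
    (hC : Interpolable (D.plug (.leaf B :: U)) C) (hU : U ≠ []) (hV : V ≠ []) :
    ∃ F, IsInterpolant (D.comp (.hole (.leaf (.rdiv B A) :: W) [])) (V ++ U) C F := by
  obtain ⟨I, hI⟩ := hC (D.comp (.hole [.leaf B] [])) U (by simp [LCtx.plug]) hU
  obtain ⟨J, hJ⟩ := hG (.hole W []) V (by simp [LCtx.plug]) hV
  refine ⟨.mul J I, .mulR _ _ _ _ hJ.left hI.left, .mulL _ _ _ _ ?_, fun g => ?_, fun g => ?_⟩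
  · have hrdivL := LProv.rdivL (W ++ [.leaf J]) (D.comp (.hole [] [.leaf I])) A B C
      (by simpa [LCtx.plug] using hJ.right) (by simpa [LCtx.plug] using hI.right)
    simpa [LCtx.plug] using hrdivL
  · simpa using add_le_add (hJ.occ_le_left g) (hI.occ_le_left g)
  · grind (ematch := 20) [hI.occ_le_right g, hJ.occ_le_right g]

theorem ldivL_of_contains {E : LCtx} (hGA : LProv G A)
    (hBC : LProv (D.plug [.leaf B]) C) (hG : Interpolable G A)
    (hC : Interpolable (D.plug [.leaf B]) C) (h : G ++ [.leaf (.ldiv A B)] = E.plug Q)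
    (hQ : Q ≠ []) : ∃ F, IsInterpolant (D.comp E) Q C F := by
  have hsuffix (P W : LHedge) (hPW : G = P ++ W) :
      ∃ F, IsInterpolant (D.comp (.hole P [])) (W ++ [.leaf (.ldiv A B)]) C F := by
    subst hPW
    rcases eq_or_ne P [] with rfl | hP
    · obtain ⟨F, hF⟩ := hC D [.leaf B] rfl (by simp)
      refine ⟨F, ?_, by simpa using hF.right, fun g => ?_, by simpa using hF.occ_le_right⟩
      · simpa [LCtx.plug] using
          LProv.ldivL W (.hole [] []) A B F hGA (by simpa [LCtx.plug] using hF.left)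
      · grind [hF.occ_le_left g]
    · exact hG.exists_isInterpolant_ldiv hC hP
  rcases LCtx.plug_eq_append h.symm hQ with
    ⟨E', rfl, rfl⟩ | ⟨E', hE', rfl⟩ | ⟨P, V, W, R, -, hW, rfl, rfl, hW', rfl⟩
  · obtain ⟨F, hF⟩ := hG E' Q rfl hQ
    refine ⟨F, hF.left, ?_, hF.occ_le_left, fun g => ?_⟩
    · simpa [LCtx.plug] using LProv.ldivL _ D A B C hF.right hBC
    · grind (ematch := 20) [hF.occ_le_right g]
  · obtain ⟨rfl, rfl⟩ := singleton_leaf_eq_plug hE' hQ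
    simpa [LCtx.comp] using hsuffix G [] (by simp)
  · obtain ⟨rfl, rfl⟩ : W = [.leaf (.ldiv A B)] ∧ R = [] := by
      simpa [hW, List.singleton_eq_append_iff] using hW'
    exact hsuffix P V rfl

theorem rdivL_of_contains {E : LCtx} (hGA : LProv G A)
    (hBC : LProv (D.plug [.leaf B]) C) (hG : Interpolable G A)
    (hC : Interpolable (D.plug [.leaf B]) C) (h : .leaf (.rdiv B A) :: G = E.plug Q)
    (hQ : Q ≠ []) : ∃ F, IsInterpolant (D.comp E) Q C F := by
  have hprefix (W P : LHedge) (hWP : G = W ++ P) :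
      ∃ F, IsInterpolant (D.comp (.hole [] P)) (.leaf (.rdiv B A) :: W) C F := by
    subst hWP
    rcases eq_or_ne P [] with rfl | hP
    · obtain ⟨F, hF⟩ := hC D [.leaf B] rfl (by simp)
      refine ⟨F, ?_, by simpa using hF.right, fun g => ?_, by simpa using hF.occ_le_right⟩
      · simpa [LCtx.plug] using
          LProv.rdivL W (.hole [] []) A B F (by simpa using hGA)
            (by simpa [LCtx.plug] using hF.left)
      · grind [hF.occ_le_left g]
    · exact hG.exists_isInterpolant_rdiv (Z := []) hC hP
  rcases LCtx.plug_eq_append (G := [_]) h.symm hQ with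
    ⟨E', hE', rfl⟩ | ⟨E', rfl, rfl⟩ | ⟨R, W, V, P, hW, -, rfl, hW', rfl, rfl⟩
  · obtain ⟨rfl, rfl⟩ := singleton_leaf_eq_plug hE' hQ
    simpa [LCtx.comp] using hprefix [] G (by simp)
  · obtain ⟨F, hF⟩ := hG E' Q rfl hQ
    refine ⟨F, hF.left, ?_, hF.occ_le_left, fun g => ?_⟩
    · simpa [LCtx.plug] using LProv.rdivL _ D A B C hF.right hBC
    · grind (ematch := 20) [hF.occ_le_right g]
  · obtain ⟨rfl, rfl⟩ : R = [] ∧ W = [.leaf (.rdiv B A)] := by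
      simpa [hW, List.singleton_eq_append_iff] using hW'
    exact hprefix V P rfl

theorem ldivL (hGA : LProv G A) (hBC : LProv (D.plug [.leaf B]) C)
    (hG : Interpolable G A) (hC : Interpolable (D.plug [.leaf B]) C) :
    Interpolable (D.plug (G ++ [.leaf (.ldiv A B)])) C := by
  refine hC.of_left_rule (by simp) (fun D C => .ldivL G D A B C hGA) (fun g => ?_)
    (fun E Q => Interpolable.ldivL_of_contains hGA hBC hG hC) ?_ ?_
  · grind
  · rintro D' U V W hU hV _ h rfl
    obtain ⟨V, rfl, rfl⟩ := concat_eq_append h hV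
    simpa using Interpolable.exists_isInterpolant_ldiv hG (by simpa [LCtx.plug] using hC) hU
  · rintro D' U V W hU hV hW h rfl
    obtain ⟨W, rfl, rfl⟩ := concat_eq_append h hW
    exact Interpolable.exists_isInterpolant_mul_ldiv hG (by simpa [LCtx.plug] using hC) hU hV

theorem rdivL (hGA : LProv G A) (hBC : LProv (D.plug [.leaf B]) C)
    (hG : Interpolable G A) (hC : Interpolable (D.plug [.leaf B]) C) :
    Interpolable (D.plug (.leaf (.rdiv B A) :: G)) C := by
  refine hC.of_left_rule (by simp) (fun D C => .rdivL G D A B C hGA) (fun g => ?_)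
    (fun E Q => Interpolable.rdivL_of_contains hGA hBC hG hC) ?_ ?_
  · simp
  · rintro D' U V W hU hV hW h rfl
    obtain ⟨U, rfl, rfl⟩ := (List.cons_eq_append_iff.1 h).resolve_left (by simp [hU])
    exact Interpolable.exists_isInterpolant_mul_rdiv hG (by simpa [LCtx.plug] using hC) hW hV
  · rintro D' U V W _ hV hW h rfl
    obtain ⟨V, rfl, rfl⟩ := (List.cons_eq_append_iff.1 h).resolve_left (by simp [hV])
    simpa using Interpolable.exists_isInterpolant_rdiv hG (by simpa [LCtx.plug] using hC) hW

theorem ldivR (hB : Interpolable (.leaf A :: H) B) :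
    Interpolable H (.ldiv A B) := by
  rintro D Q rfl hQ
  obtain ⟨F, hF⟩ := hB ((LCtx.hole [.leaf A] []).comp D) Q (by simp [LCtx.plug]) hQ
  refine ⟨F, hF.left, .ldivR _ _ _ (D.plug_ne_nil (by simp)) ?_, hF.occ_le_left, fun g => ?_⟩
  · simpa [LCtx.plug] using hF.right
  · simpa [add_comm, add_left_comm, add_assoc] using hF.occ_le_right g

theorem rdivR (hB : Interpolable (H ++ [.leaf A]) B) :
    Interpolable H (.rdiv B A) := by
  rintro D Q rfl hQ
  obtain ⟨F, hF⟩ := hB ((LCtx.hole [] [.leaf A]).comp D) Q (by simp [LCtx.plug]) hQ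
  refine ⟨F, hF.left, .rdivR _ _ _ (D.plug_ne_nil (by simp)) ?_, hF.occ_le_left, fun g => ?_⟩
  · simpa [LCtx.plug] using hF.right
  · simpa [add_comm, add_left_comm, add_assoc] using hF.occ_le_right g

theorem boxR {k : ℕ} (hA : Interpolable [.node k G] A) :
    Interpolable G (.box k A) := by
  rintro D Q rfl hQ
  obtain ⟨F, hF⟩ := hA (.brk k D [] []) Q (by simp [LCtx.plug]) hQ
  refine ⟨F, hF.left, .boxR k _ _ (D.plug_ne_nil (by simp)) hF.right, hF.occ_le_left,
    fun g => ?_⟩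
  grind [hF.occ_le_right g]

theorem diaR {k : ℕ} (hGA : LProv G A) (hG : Interpolable G A) :
    Interpolable [.node k G] (.dia k A) := by
  intro D Q h hQ
  rcases singleton_node_eq_plug h hQ with ⟨rfl, rfl⟩ | ⟨E, rfl, rfl⟩
  · obtain ⟨F, hF⟩ := hG (.hole [] []) G (by simp [LCtx.plug]) hGA.ne_nil
    refine ⟨.dia k F, .diaR k G F hF.left, ?_, fun g => ?_, fun g => ?_⟩
    · exact .diaL k (.hole [] []) F _ (.diaR k _ A hF.right)
    · simpa using hF.occ_le_left g
    · simpa using hF.occ_le_right g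
  · obtain ⟨F, hF⟩ := hG E Q rfl hQ
    refine ⟨F, hF.left, .diaR k _ A hF.right, hF.occ_le_left, fun g => ?_⟩
    grind [hF.occ_le_right g]

theorem mulR (hGA : LProv G A) (hHB : LProv H B) (hG : Interpolable G A)
    (hH : Interpolable H B) : Interpolable (G ++ H) (.mul A B) := by
  intro D Q h hQ
  rcases LCtx.plug_eq_append h.symm hQ with
    ⟨E, rfl, rfl⟩ | ⟨E, rfl, rfl⟩ | ⟨P, V, W, R, hV, hW, rfl, rfl, rfl, rfl⟩
  · obtain ⟨F, hF⟩ := hG E Q rfl hQ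
    refine ⟨F, hF.left, ?_, hF.occ_le_left, fun g => ?_⟩
    · simpa [LCtx.plug] using LProv.mulR _ _ _ _ hF.right hHB
    · grind [hF.occ_le_right g]
  · obtain ⟨F, hF⟩ := hH E Q rfl hQ
    refine ⟨F, hF.left, ?_, hF.occ_le_left, fun g => ?_⟩
    · simpa [LCtx.plug] using LProv.mulR _ _ _ _ hGA hF.right
    · grind [hF.occ_le_right g]
  · obtain ⟨I, hI⟩ := hG (.hole P []) V (by simp [LCtx.plug]) hV
    obtain ⟨J, hJ⟩ := hH (.hole [] R) W (by simp [LCtx.plug]) hW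
    refine ⟨.mul I J, .mulR _ _ _ _ hI.left hJ.left, .mulL _ _ _ _ ?_, fun g => ?_, fun g => ?_⟩
    · simpa [LCtx.plug] using LProv.mulR _ _ _ _ hI.right hJ.right
    · simpa using add_le_add (hI.occ_le_left g) (hJ.occ_le_left g)
    · grind [hI.occ_le_right g, hJ.occ_le_right g]

end Interpolable

theorem LProv.interpolable (h : LProv H C) : Interpolable H C := by
  induction h with
  | id p k => exact .id p k
  | ldivL G D A B C hGA hBC ihG ihC => exact .ldivL hGA hBC ihG ihC
  | rdivL G D A B C hGA hBC ihG ihC => exact .rdivL hGA hBC ihG ihC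
  | ldivR H A B _ _ ih => exact .ldivR ih
  | rdivR H A B _ _ ih => exact .rdivR ih
  | mulL D A B C _ ih => exact .mulL ih
  | mulR G H A B hGA hHB ihG ihH => exact .mulR hGA hHB ihG ihH
  | diaL k D A C _ ih => exact .diaL ih
  | diaR k G A hGA ih => exact .diaR hGA ih
  | boxL k D A C _ ih => exact .boxL ih
  | boxR k G A _ _ ih => exact .boxR ih

end Interpolation

section CutElimination

/-- L◇ without the Cut rule. -/
inductive CutFree : PHedge → PTy → Prop where
  | id (p) : CutFree [.leaf (.prim p)] (.prim p)
  | ldivL (G : PHedge) (D : PCtx) (A B C) :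
      CutFree G A → CutFree (D.plug [.leaf B]) C → CutFree (D.plug (G ++ [.leaf (.ldiv A B)])) C
  | ldivR (H : PHedge) (A B) : H ≠ [] → CutFree (.leaf A :: H) B → CutFree H (.ldiv A B)
  | rdivL (G : PHedge) (D : PCtx) (A B C) :
      CutFree G A → CutFree (D.plug [.leaf B]) C → CutFree (D.plug (.leaf (.rdiv B A) :: G)) C
  | rdivR (H : PHedge) (A B) : H ≠ [] → CutFree (H ++ [.leaf A]) B → CutFree H (.rdiv B A)
  | mulL (D : PCtx) (A B C) :
      CutFree (D.plug [.leaf A, .leaf B]) C → CutFree (D.plug [.leaf (.mul A B)]) C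
  | mulR (G H : PHedge) (A B) : CutFree G A → CutFree H B → CutFree (G ++ H) (.mul A B)
  | diaL (D : PCtx) (A C) :
      CutFree (D.plug [.node [.leaf A]]) C → CutFree (D.plug [.leaf (.dia A)]) C
  | diaR (G : PHedge) (A) : CutFree G A → CutFree [.node G] (.dia A)
  | boxL (D : PCtx) (A C) :
      CutFree (D.plug [.leaf A]) C → CutFree (D.plug [.node [.leaf (.box A)]]) C
  | boxR (G : PHedge) (A) : G ≠ [] → CutFree [.node G] A → CutFree G (.box A)

/-- Trees without empty brackets. -/
inductive Solid : PTree → Prop where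
  | leaf (A : PTy) : Solid (.leaf A)
  | node (ts : PHedge) : ts ≠ [] → (∀ t ∈ ts, Solid t) → Solid (.node ts)

/-- Substitution of a context for the hole. -/
def PCtx.comp : PCtx → PCtx → PCtx
  | .hole pre post, .hole pre' post' => .hole (pre ++ pre') (post' ++ post)
  | .hole pre post, .brk E pre' post' => .brk E (pre ++ pre') (post' ++ post)
  | .brk D pre post, E => .brk (D.comp E) pre post

@[simp]
theorem PCtx.plug_comp (D E : PCtx) (X : PHedge) : (D.comp E).plug X = D.plug (E.plug X) := by
  induction D with
  | hole pre post => cases E <;> simp [comp, plug]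
  | brk D pre post ih => simp [comp, plug, ih]

theorem PCtx.plug_ne_nil (D : PCtx) {X : PHedge} (hX : X ≠ []) : D.plug X ≠ [] := by
  cases D <;> simp [plug, hX]

@[simp]
theorem solid_leaf (A : PTy) : Solid (.leaf A) := .leaf A

@[simp]
theorem solid_node_iff {ts : PHedge} : Solid (.node ts) ↔ ts ≠ [] ∧ ∀ t ∈ ts, Solid t :=
  ⟨fun | .node _ h h' => ⟨h, h'⟩, fun h => .node ts h.1 h.2⟩

theorem solid_plug {D : PCtx} {X Y : PHedge} (h : ∀ t ∈ D.plug X, Solid t) (hY : Y ≠ [])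
    (hY' : ∀ t ∈ Y, Solid t) : ∀ t ∈ D.plug Y, Solid t := by
  induction D with
  | hole pre post =>
    simp only [PCtx.plug, List.forall_mem_append] at h ⊢
    exact ⟨⟨h.1.1, hY'⟩, h.2⟩
  | brk D pre post ih =>
    simp only [PCtx.plug, List.forall_mem_append, List.forall_mem_cons, solid_node_iff] at h ⊢
    exact ⟨h.1, ⟨D.plug_ne_nil hY, ih h.2.1.2⟩, h.2.2⟩

theorem PProv.ne_nil_and_solid {H : PHedge} {A : PTy} (h : PProv H A) :
    H ≠ [] ∧ ∀ t ∈ H, Solid t := by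
  induction h with
  | id => simp
  | ldivL G D A B _ _ _ ihG ihC | rdivL G D A B _ _ _ ihG ihC =>
    exact ⟨D.plug_ne_nil (by simp), solid_plug ihC.2 (by simp)
      (by simpa [or_imp, forall_and] using ihG.2)⟩
  | ldivR H A _ hH _ ih | rdivR H A _ hH _ ih => exact ⟨hH, fun t ht => ih.2 t (by simp [ht])⟩
  | mulL D A B _ _ ih | diaL D A _ _ ih | boxL D A _ _ ih =>
    exact ⟨D.plug_ne_nil (by simp), solid_plug ih.2 (by simp) (by simp)⟩
  | mulR G H _ _ _ _ ihG ihH =>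
    exact ⟨by simp [ihG.1], List.forall_mem_append.2 ⟨ihG.2, ihH.2⟩⟩
  | diaR G A _ ih => simpa using ih
  | boxR G _ _ ih => simpa using ih.2
  | cut G D A _ _ _ ihG ihB => exact ⟨D.plug_ne_nil ihG.1, solid_plug ihB.2 ihG.1 ihG.2⟩

theorem CutFree.ne_nil {H : PHedge} {A : PTy} (h : CutFree H A) : H ≠ [] := by
  induction h with
  | id | diaR => simp
  | ldivR _ _ _ hH | rdivR _ _ _ hH | boxR _ _ hH => exact hH
  | mulR _ _ _ _ _ _ ihG => simp [ihG]
  | ldivL | rdivL | mulL | diaL | boxL => exact PCtx.plug_ne_nil _ (by simp)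

/-- The nonempty hedges that can replace the members of `X` in every context without losing
cut-free provability. -/
def cutClosure (X : Set PHedge) : Set PHedge :=
  {s | s ≠ [] ∧ ∀ (D : PCtx) (C : PTy), (∀ x ∈ X, CutFree (D.plug x) C) → CutFree (D.plug s) C}

/-- The phase semantics of L◇ in the cut-free calculus: a type denotes a set of hedges closed
under `cutClosure`. -/
def PTy.sem : PTy → Set PHedge
  | .prim p => {s | CutFree s (.prim p)}
  | .ldiv A B => {s | s ≠ [] ∧ ∀ a ∈ A.sem, a ++ s ∈ B.sem}
  | .rdiv B A => {s | s ≠ [] ∧ ∀ a ∈ A.sem, s ++ a ∈ B.sem}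
  | .mul A B => cutClosure (Set.image2 (· ++ ·) A.sem B.sem)
  | .dia A => cutClosure ((fun s => [.node s]) '' A.sem)
  | .box A => {s | s ≠ [] ∧ [.node s] ∈ A.sem}

theorem mem_cutClosure {X : Set PHedge} {s : PHedge} (hs : s ∈ X) (hs' : s ≠ []) :
    s ∈ cutClosure X :=
  ⟨hs', fun _ _ h => h s hs⟩

theorem plug_mem_cutClosure {X Y : Set PHedge} {E : PCtx} {s : PHedge}
    (h : ∀ x ∈ X, E.plug x ∈ cutClosure Y) (hs : s ∈ cutClosure X) :
    E.plug s ∈ cutClosure Y := by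
  refine ⟨E.plug_ne_nil hs.1, fun D C hD => ?_⟩
  rw [← PCtx.plug_comp]
  exact hs.2 _ _ fun x hx => by simpa using (h x hx).2 D C hD

theorem CutFree.of_mem_cutClosure {X : Set PHedge} {s : PHedge} {A : PTy}
    (hs : s ∈ cutClosure X) (h : ∀ x ∈ X, CutFree x A) : CutFree s A := by
  simpa [PCtx.plug] using hs.2 (.hole [] []) A (by simpa [PCtx.plug] using h)

theorem PTy.ne_nil_of_mem_sem {A : PTy} {s : PHedge} (hs : s ∈ A.sem) : s ≠ [] := by
  cases A with
  | prim => exact CutFree.ne_nil hs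
  | ldiv | rdiv | mul | dia | box => exact hs.1

theorem PTy.cutClosure_sem (A : PTy) : cutClosure A.sem = A.sem := by
  refine subset_antisymm ?_ fun s hs => mem_cutClosure hs (ne_nil_of_mem_sem hs)
  induction A with
  | prim p => exact fun s hs => .of_mem_cutClosure hs fun x hx => hx
  | ldiv A B _ ih =>
    refine fun s hs => ⟨hs.1, fun a ha => ih ?_⟩
    simpa [PCtx.plug] using plug_mem_cutClosure (E := .hole a []) (Y := B.sem)
      (fun x hx => mem_cutClosure (by simpa [PCtx.plug] using hx.2 a ha)
        (PCtx.plug_ne_nil _ hx.1)) hs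
  | rdiv B A ih _ =>
    refine fun s hs => ⟨hs.1, fun a ha => ih ?_⟩
    simpa [PCtx.plug] using plug_mem_cutClosure (E := .hole [] a) (Y := B.sem)
      (fun x hx => mem_cutClosure (by simpa [PCtx.plug] using hx.2 a ha)
        (PCtx.plug_ne_nil _ hx.1)) hs
  | mul | dia =>
    intro s hs
    simpa [PCtx.plug, sem] using
      plug_mem_cutClosure (E := .hole [] []) (by simp [PCtx.plug, sem]) hs
  | box A ih =>
    refine fun s hs => ⟨hs.1, ih ?_⟩
    simpa [PCtx.plug] using plug_mem_cutClosure (E := .brk (.hole [] []) [] []) (Y := A.sem)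
      (fun x hx => mem_cutClosure (by simpa [PCtx.plug] using hx.2) (by simp [PCtx.plug])) hs

theorem PTy.leaf_mem_sem_and_cutFree (A : PTy) :
    [.leaf A] ∈ A.sem ∧ ∀ s ∈ A.sem, CutFree s A := by
  induction A with
  | prim p => exact ⟨.id p, fun _ => id⟩
  | ldiv A B ihA ihB =>
    refine ⟨⟨by simp, fun a ha => ?_⟩, fun s hs => .ldivR s A B hs.1 (ihB.2 _ (hs.2 _ ihA.1))⟩
    rw [← cutClosure_sem]
    exact ⟨by simp, fun D C h => .ldivL a D A B C (ihA.2 a ha) (h _ ihB.1)⟩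
  | rdiv B A ihB ihA =>
    refine ⟨⟨by simp, fun a ha => ?_⟩, fun s hs => .rdivR s A B hs.1 (ihB.2 _ (hs.2 _ ihA.1))⟩
    rw [← cutClosure_sem]
    exact ⟨by simp, fun D C h => .rdivL a D A B C (ihA.2 a ha) (h _ ihB.1)⟩
  | mul A B ihA ihB =>
    refine ⟨⟨by simp, fun D C h => .mulL D A B C (h _ ⟨_, ihA.1, _, ihB.1, rfl⟩)⟩,
      fun s hs => .of_mem_cutClosure hs ?_⟩
    rintro _ ⟨a, ha, b, hb, rfl⟩
    exact .mulR a b A B (ihA.2 a ha) (ihB.2 b hb)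
  | dia A ih =>
    refine ⟨⟨by simp, fun D C h => .diaL D A C (h _ ⟨_, ih.1, rfl⟩)⟩,
      fun s hs => .of_mem_cutClosure hs ?_⟩
    rintro _ ⟨a, ha, rfl⟩
    exact .diaR a A (ih.2 a ha)
  | box A ih =>
    refine ⟨⟨by simp, ?_⟩, fun s hs => .boxR s A hs.1 (ih.2 _ hs.2)⟩
    rw [← cutClosure_sem]
    exact ⟨by simp, fun D C h => .boxL D A C (h _ ih.1)⟩

/-- `Inst H s` holds if `s` arises from `H` by replacing every leaf by an element of its
denotation. -/
inductive Inst : PHedge → PHedge → Prop where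
  | nil : Inst [] []
  | leaf (A s H K) : s ∈ A.sem → Inst H K → Inst (.leaf A :: H) (s ++ K)
  | node (G s H K) : Inst G s → Inst H K → Inst (.node G :: H) (.node s :: K)

namespace Inst

variable {A : PTy} {G H K X s : PHedge}

theorem singleton_leaf (hs : s ∈ A.sem) : Inst [.leaf A] s := by
  simpa using leaf A s [] [] hs nil

theorem mem_sem (h : Inst [.leaf A] s) : s ∈ A.sem := by
  obtain _ | ⟨_, s, _, _, hs, ⟨⟩⟩ := h
  simpa using hs

theorem exists_of_singleton_node (h : Inst [.node G] s) : ∃ g, s = [.node g] ∧ Inst G g := by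
  obtain _ | _ | ⟨_, g, _, _, hg, ⟨⟩⟩ := h
  exact ⟨g, rfl, hg⟩

theorem ne_nil (h : Inst H s) (hH : H ≠ []) : s ≠ [] := by
  cases h with
  | nil => exact absurd rfl hH
  | leaf A s H K hs => simp [PTy.ne_nil_of_mem_sem hs]
  | node => simp

theorem append (hG : Inst G s) (hH : Inst H K) : Inst (G ++ H) (s ++ K) := by
  induction G generalizing s with
  | nil => cases hG; exact hH
  | cons t G ih =>
    cases hG with
    | leaf A s _ K' hs hK => simpa using leaf A s _ _ hs (ih hK)
    | node T s _ K' hs hK => exact node T s _ _ hs (ih hK)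

theorem exists_append (h : Inst (G ++ H) s) : ∃ g k, s = g ++ k ∧ Inst G g ∧ Inst H k := by
  induction G generalizing s with
  | nil => exact ⟨[], s, rfl, nil, h⟩
  | cons t G ih =>
    cases h with
    | leaf A a _ K ha hK =>
      obtain ⟨g, k, rfl, hg, hk⟩ := ih hK
      exact ⟨a ++ g, k, by simp, leaf A a _ _ ha hg, hk⟩
    | node T a _ K ha hK =>
      obtain ⟨g, k, rfl, hg, hk⟩ := ih hK
      exact ⟨.node a :: g, k, by simp, node T a _ _ ha hg, hk⟩

mutual
theorem refl_tree : (t : PTree) → Inst [t] [t]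
  | .leaf A => singleton_leaf A.leaf_mem_sem_and_cutFree.1
  | .node G => node G G [] [] (refl G) nil
theorem refl : (H : List PTree) → Inst H H
  | [] => nil
  | t :: H => append (refl_tree t) (refl H)
end

theorem exists_plug {D : PCtx} (h : Inst (D.plug X) s) :
    ∃ D' : PCtx, ∃ x, s = D'.plug x ∧ Inst X x ∧
      ∀ Y y, Inst Y y → Inst (D.plug Y) (D'.plug y) := by
  induction D generalizing s with
  | hole pre post =>
    obtain ⟨_, c, rfl, h, hc⟩ := exists_append h
    obtain ⟨a, x, rfl, ha, hx⟩ := exists_append h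
    exact ⟨.hole a c, x, rfl, hx, fun Y y hY => (ha.append hY).append hc⟩
  | brk D pre post ih =>
    obtain ⟨a, _, rfl, ha, h⟩ := exists_append h
    obtain _ | _ | ⟨_, g, _, c, hg, hc⟩ := h
    obtain ⟨D', x, rfl, hx, hD'⟩ := ih hg
    exact ⟨.brk D' a c, x, rfl, hx, fun Y y hY => ha.append (node _ _ _ _ (hD' Y y hY) hc)⟩

theorem mem_sem_of_forall {D : PCtx} {C : PTy} (hX : ∀ x, Inst X x → x ∈ A.sem)
    (hD : ∀ s, Inst (D.plug [.leaf A]) s → s ∈ C.sem) (h : Inst (D.plug X) s) : s ∈ C.sem := by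
  obtain ⟨D', x, rfl, hx, hD'⟩ := exists_plug h
  exact hD _ (hD' _ _ (.singleton_leaf (hX x hx)))

theorem mem_sem_of_cutClosure {D : PCtx} {C : PTy} {S : Set PHedge}
    (hX : ∀ s ∈ S, Inst X s) (hD : ∀ s, Inst (D.plug X) s → s ∈ C.sem)
    (hA : A.sem = cutClosure S) (h : Inst (D.plug [.leaf A]) s) : s ∈ C.sem := by
  obtain ⟨D', x, rfl, hx, hD'⟩ := exists_plug h
  rw [← C.cutClosure_sem]
  refine plug_mem_cutClosure (fun y hy => ?_) (hA ▸ hx.mem_sem)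
  rw [C.cutClosure_sem]
  exact hD _ (hD' _ _ (hX y hy))

end Inst

theorem PProv.mem_sem {H : PHedge} {A : PTy} (h : PProv H A) :
    ∀ s, Inst H s → s ∈ A.sem := by
  induction h with
  | id p => exact fun s hs => hs.mem_sem
  | ldivL G D A B C _ _ ihA ihC =>
    refine fun s hs => hs.mem_sem_of_forall (fun x hx => ?_) ihC
    obtain ⟨g, f, rfl, hg, hf⟩ := hx.exists_append
    exact hf.mem_sem.2 g (ihA g hg)
  | rdivL G D A B C _ _ ihA ihC =>
    refine fun s hs => hs.mem_sem_of_forall (fun x hx => ?_) ihC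
    obtain ⟨f, g, rfl, hf, hg⟩ := hx.exists_append (G := [_])
    exact hf.mem_sem.2 g (ihA g hg)
  | ldivR H A B hH _ ih =>
    exact fun s hs => ⟨hs.ne_nil hH, fun a ha => ih _ (.leaf A a H s ha hs)⟩
  | rdivR H A B hH _ ih =>
    exact fun s hs => ⟨hs.ne_nil hH, fun a ha => ih _ (hs.append (.singleton_leaf ha))⟩
  | mulL D A B C _ ih =>
    refine fun s hs => hs.mem_sem_of_cutClosure ?_ ih rfl
    rintro _ ⟨a, ha, b, hb, rfl⟩
    exact .leaf A a _ b ha (.singleton_leaf hb)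
  | mulR G H A B _ _ ihA ihB =>
    intro s hs
    obtain ⟨g, k, rfl, hg, hk⟩ := hs.exists_append
    exact mem_cutClosure ⟨g, ihA g hg, k, ihB k hk, rfl⟩
      (by simp [PTy.ne_nil_of_mem_sem (ihA g hg)])
  | diaL D A C _ ih =>
    refine fun s hs => hs.mem_sem_of_cutClosure ?_ ih rfl
    rintro _ ⟨a, ha, rfl⟩
    exact .node _ _ _ _ (.singleton_leaf ha) .nil
  | diaR G A _ ih =>
    intro s hs
    obtain ⟨g, rfl, hg⟩ := hs.exists_of_singleton_node
    exact mem_cutClosure ⟨g, ih g hg, rfl⟩ (by simp)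
  | boxL D A C _ ih =>
    refine fun s hs => hs.mem_sem_of_forall (fun x hx => ?_) ih
    obtain ⟨g, rfl, hg⟩ := hx.exists_of_singleton_node
    exact hg.mem_sem.2
  | boxR G A hGA ih =>
    have hG : G ≠ [] := (solid_node_iff.1 (hGA.ne_nil_and_solid.2 _ (List.mem_singleton_self _))).1
    exact fun s hs => ⟨hs.ne_nil hG, ih _ (.node G s [] [] hs .nil)⟩
  | cut G D A B _ _ ihA ihB => exact fun s hs => hs.mem_sem_of_forall ihA ihB

theorem PProv.cutFree {H : PHedge} {A : PTy} (h : PProv H A) : CutFree H A :=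
  A.leaf_mem_sem_and_cutFree.2 H (h.mem_sem H (.refl H))

end CutElimination

section ThinLabelling

theorem exists_disjoint_infinite_subsets {α : Type*} {S : Set α} (hS : S.Infinite) :
    ∃ T U, T.Infinite ∧ U.Infinite ∧ Disjoint T U ∧ T ⊆ S ∧ U ⊆ S := by
  obtain ⟨T, U, rfl, hTU, hcard⟩ := hS.exists_union_disjoint_cardinal_eq_of_infinite
  have hiff : T.Infinite ↔ U.Infinite := by
    simp only [← Set.infinite_coe_iff, Cardinal.infinite_iff, hcard]
  have hor := Set.infinite_union.1 hS
  exact ⟨T, U, by tauto, by tauto, hTU, Set.subset_union_left, Set.subset_union_right⟩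

theorem eraseHedge_eq_map (H : LHedge) : eraseHedge H = H.map eraseTree := by
  induction H with
  | nil => rfl
  | cons t H ih => simp [ih]

theorem eraseHedge_eq_append {H : LHedge} {G K : PHedge} (h : eraseHedge H = G ++ K) :
    ∃ G' K', H = G' ++ K' ∧ eraseHedge G' = G ∧ eraseHedge K' = K := by
  simpa only [eraseHedge_eq_map, List.map_eq_append_iff] using h

theorem eraseHedge_eq_leaf_cons {H : LHedge} {A : PTy} {K : PHedge}
    (h : eraseHedge H = .leaf A :: K) :
    ∃ A' K', H = .leaf A' :: K' ∧ A'.erase = A ∧ eraseHedge K' = K := by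
  rcases H with _ | ⟨A' | _, K'⟩ <;> simp_all

theorem eraseHedge_eq_node_cons {H : LHedge} {G K : PHedge} (h : eraseHedge H = .node G :: K) :
    ∃ k G' K', H = .node k G' :: K' ∧ eraseHedge G' = G ∧ eraseHedge K' = K := by
  rcases H with _ | ⟨_ | ⟨k, G'⟩, K'⟩ <;> simp_all

theorem eraseHedge_eq_singleton_leaf {H : LHedge} {A : PTy} (h : eraseHedge H = [.leaf A]) :
    ∃ A', H = [.leaf A'] ∧ A'.erase = A := by
  obtain ⟨A', K, rfl, rfl, hK⟩ := eraseHedge_eq_leaf_cons h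
  exact ⟨A', by rw [eraseHedge_eq_nil.1 hK], rfl⟩

theorem eraseHedge_eq_singleton_node {H : LHedge} {G : PHedge} (h : eraseHedge H = [.node G]) :
    ∃ k G', H = [.node k G'] ∧ eraseHedge G' = G := by
  obtain ⟨k, G', K, rfl, rfl, hK⟩ := eraseHedge_eq_node_cons h
  exact ⟨k, G', by rw [eraseHedge_eq_nil.1 hK], rfl⟩

theorem eraseHedge_eq_map_leaf {H : LHedge} {L : List PTy} (h : eraseHedge H = L.map .leaf) :
    ∃ L' : List LTy, H = L'.map .leaf ∧ L'.map LTy.erase = L := by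
  induction L generalizing H with
  | nil => exact ⟨[], eraseHedge_eq_nil.1 h, rfl⟩
  | cons A L ih =>
    obtain ⟨A', H, rfl, rfl, hH⟩ := eraseHedge_eq_leaf_cons h
    obtain ⟨L', rfl, rfl⟩ := ih hH
    exact ⟨A' :: L', rfl, rfl⟩

theorem eraseHedge_eq_plug {H : LHedge} {D : PCtx} {X : PHedge} (h : eraseHedge H = D.plug X) :
    ∃ D' : LCtx, ∃ X', H = D'.plug X' ∧ D'.erase = D ∧ eraseHedge X' = X := by
  induction D generalizing H with
  | hole pre post =>
    rw [PCtx.plug] at h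
    obtain ⟨_, c, rfl, hleft, rfl⟩ := eraseHedge_eq_append h
    obtain ⟨a, X', rfl, rfl, rfl⟩ := eraseHedge_eq_append hleft
    exact ⟨.hole a c, X', rfl, rfl, rfl⟩
  | brk D pre post ih =>
    rw [PCtx.plug] at h
    obtain ⟨a, _, rfl, rfl, hright⟩ := eraseHedge_eq_append h
    obtain ⟨k, G, c, rfl, hG, rfl⟩ := eraseHedge_eq_node_cons hright
    obtain ⟨D', X', rfl, rfl, rfl⟩ := ih hG
    exact ⟨.brk k D' a c, X', rfl, rfl, rfl⟩

/-- A derivable labelling of the sequent `H ⇒ A` with labels in `S`, in which every letter occurs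
at most twice. -/
structure IsThinLabelling (S : Set ℕ) (H : PHedge) (A : PTy) (H' : LHedge) (A' : LTy) : Prop where
  prov : LProv H' A'
  erase_left : eraseHedge H' = H
  erase_right : A'.erase = A
  occ_le_two (g : Letter) : occ g (hedgeWord H') + occ g A'.word ≤ 2
  label_mem (g : Letter) : 0 < occ g (hedgeWord H') + occ g A'.word → g.label ∈ S

namespace IsThinLabelling

variable {S : Set ℕ} {A B C : PTy} {G H K : PHedge} {A' B' C' : LTy} {G' H' K' : LHedge}

theorem of_occ_le (h : IsThinLabelling S H A H' A') (hprov : LProv K' C')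
    (hK : eraseHedge K' = K) (hC : C'.erase = C)
    (hocc : ∀ g, occ g (hedgeWord K') + occ g C'.word ≤ occ g (hedgeWord H') + occ g A'.word) :
    IsThinLabelling S K C K' C' :=
  ⟨hprov, hK, hC, fun g => (hocc g).trans (h.occ_le_two g),
    fun g hg => h.label_mem g (hg.trans_le (hocc g))⟩

theorem of_fresh {k : ℕ} (hk : k ∈ S) (h : IsThinLabelling (S \ {k}) H A H' A')
    (hprov : LProv K' C') (hK : eraseHedge K' = K) (hC : C'.erase = C)
    (hocc : ∀ g, occ g (hedgeWord K') + occ g C'.word ≤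
      occ g (hedgeWord H') + occ g A'.word + if g.label = k then 2 else 0) :
    IsThinLabelling S K C K' C' := by
  have hmem : ∀ g, 0 < occ g (hedgeWord H') + occ g A'.word → g.label ∈ S ∧ g.label ≠ k :=
    h.label_mem
  refine ⟨hprov, hK, hC, fun g => ?_, fun g hg => ?_⟩
  · have := hocc g; have := h.occ_le_two g; have := hmem g
    grind
  · have := hocc g; have := hmem g
    grind

theorem of_disjoint {T U : Set ℕ} (hTU : Disjoint T U) (hT : T ⊆ S) (hU : U ⊆ S)
    (hG : IsThinLabelling T G A G' A') (hH : IsThinLabelling U H B H' B') (hprov : LProv K' C')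
    (hK : eraseHedge K' = K) (hC : C'.erase = C)
    (hocc : ∀ g, occ g (hedgeWord K') + occ g C'.word ≤
      occ g (hedgeWord G') + occ g A'.word + (occ g (hedgeWord H') + occ g B'.word)) :
    IsThinLabelling S K C K' C' := by
  refine ⟨hprov, hK, hC, fun g => ?_, fun g hg => ?_⟩
  · have hnot : ¬(g.label ∈ T ∧ g.label ∈ U) := fun h => Set.disjoint_left.1 hTU h.1 h.2
    grind [hocc g, hG.occ_le_two g, hG.label_mem g, hH.occ_le_two g, hH.label_mem g]
  · grind [hocc g, hG.label_mem g, hH.label_mem g]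

end IsThinLabelling

/-- Thin labellings exist with labels from any prescribed infinite set. -/
def ThinlyLabellable (H : PHedge) (A : PTy) : Prop :=
  ∀ S : Set ℕ, S.Infinite → ∃ H' A', IsThinLabelling S H A H' A'

namespace ThinlyLabellable

variable {A B C : PTy} {D : PCtx} {G H : PHedge}

theorem id (p : ℕ) : ThinlyLabellable [.leaf (.prim p)] (.prim p) := by
  intro S hS
  obtain ⟨k, hk⟩ := hS.nonempty
  refine ⟨_, _, .id p k, by simp, by simp, fun g => ?_, fun g hg => ?_⟩
  · grind
  · obtain rfl : g = .prim p k := by grind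
    exact hk

theorem ldivL (hA : ThinlyLabellable G A) (hC : ThinlyLabellable (D.plug [.leaf B]) C) :
    ThinlyLabellable (D.plug (G ++ [.leaf (.ldiv A B)])) C := by
  intro S hS
  obtain ⟨T, U, hTinf, hUinf, hTU, hT, hU⟩ := exists_disjoint_infinite_subsets hS
  obtain ⟨G', A', h⟩ := hA T hTinf
  obtain ⟨_, C', h'⟩ := hC U hUinf
  obtain ⟨D', X, rfl, rfl, hX⟩ := eraseHedge_eq_plug h'.erase_left
  obtain ⟨B', rfl, rfl⟩ := eraseHedge_eq_singleton_leaf hX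
  exact ⟨_, C', .of_disjoint hTU hT hU h h' (.ldivL G' D' A' B' C' h.prov h'.prov)
    (by simp [h.erase_left, h.erase_right]) h'.erase_right fun g => by grind⟩

theorem rdivL (hA : ThinlyLabellable G A) (hC : ThinlyLabellable (D.plug [.leaf B]) C) :
    ThinlyLabellable (D.plug (.leaf (.rdiv B A) :: G)) C := by
  intro S hS
  obtain ⟨T, U, hTinf, hUinf, hTU, hT, hU⟩ := exists_disjoint_infinite_subsets hS
  obtain ⟨G', A', h⟩ := hA T hTinf
  obtain ⟨_, C', h'⟩ := hC U hUinf
  obtain ⟨D', X, rfl, rfl, hX⟩ := eraseHedge_eq_plug h'.erase_left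
  obtain ⟨B', rfl, rfl⟩ := eraseHedge_eq_singleton_leaf hX
  exact ⟨_, C', .of_disjoint hTU hT hU h h' (.rdivL G' D' A' B' C' h.prov h'.prov)
    (by simp [h.erase_left, h.erase_right]) h'.erase_right fun g => by grind⟩

theorem mulR (hA : ThinlyLabellable G A) (hB : ThinlyLabellable H B) :
    ThinlyLabellable (G ++ H) (.mul A B) := by
  intro S hS
  obtain ⟨T, U, hTinf, hUinf, hTU, hT, hU⟩ := exists_disjoint_infinite_subsets hS
  obtain ⟨G', A', h⟩ := hA T hTinf
  obtain ⟨H', B', h'⟩ := hB U hUinf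
  exact ⟨_, _, .of_disjoint hTU hT hU h h' (.mulR G' H' A' B' h.prov h'.prov)
    (by simp [h.erase_left, h'.erase_left]) (by simp [h.erase_right, h'.erase_right])
    fun g => by grind⟩

theorem ldivR (hH : H ≠ []) (hB : ThinlyLabellable (.leaf A :: H) B) :
    ThinlyLabellable H (.ldiv A B) := by
  intro S hS
  obtain ⟨_, B', h⟩ := hB S hS
  obtain ⟨A', H', rfl, rfl, rfl⟩ := eraseHedge_eq_leaf_cons h.erase_left
  exact ⟨H', _, h.of_occ_le (.ldivR H' A' B' (by simpa using hH) h.prov) rfl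
    (by simp [h.erase_right]) fun g => by grind⟩

theorem rdivR (hH : H ≠ []) (hB : ThinlyLabellable (H ++ [.leaf A]) B) :
    ThinlyLabellable H (.rdiv B A) := by
  intro S hS
  obtain ⟨_, B', h⟩ := hB S hS
  obtain ⟨H', X, rfl, rfl, hX⟩ := eraseHedge_eq_append h.erase_left
  obtain ⟨A', rfl, rfl⟩ := eraseHedge_eq_singleton_leaf hX
  exact ⟨H', _, h.of_occ_le (.rdivR H' A' B' (by simpa using hH) h.prov) rfl
    (by simp [h.erase_right]) fun g => by grind⟩

theorem mulL (hC : ThinlyLabellable (D.plug [.leaf A, .leaf B]) C) :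
    ThinlyLabellable (D.plug [.leaf (.mul A B)]) C := by
  intro S hS
  obtain ⟨_, C', h⟩ := hC S hS
  obtain ⟨D', X, rfl, rfl, hX⟩ := eraseHedge_eq_plug h.erase_left
  obtain ⟨A', Y, rfl, rfl, hY⟩ := eraseHedge_eq_leaf_cons hX
  obtain ⟨B', rfl, rfl⟩ := eraseHedge_eq_singleton_leaf hY
  exact ⟨_, C', h.of_occ_le (.mulL D' A' B' C' h.prov) (by simp) h.erase_right
    fun g => by grind⟩

theorem diaL (hC : ThinlyLabellable (D.plug [.node [.leaf A]]) C) :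
    ThinlyLabellable (D.plug [.leaf (.dia A)]) C := by
  intro S hS
  obtain ⟨_, C', h⟩ := hC S hS
  obtain ⟨D', X, rfl, rfl, hX⟩ := eraseHedge_eq_plug h.erase_left
  obtain ⟨k, Y, rfl, hY⟩ := eraseHedge_eq_singleton_node hX
  obtain ⟨A', rfl, rfl⟩ := eraseHedge_eq_singleton_leaf hY
  exact ⟨_, C', h.of_occ_le (.diaL k D' A' C' h.prov) (by simp) h.erase_right
    fun g => by grind⟩

theorem boxR (hG : G ≠ []) (hA : ThinlyLabellable [.node G] A) :
    ThinlyLabellable G (.box A) := by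
  intro S hS
  obtain ⟨_, A', h⟩ := hA S hS
  obtain ⟨k, G', rfl, rfl⟩ := eraseHedge_eq_singleton_node h.erase_left
  exact ⟨G', _, h.of_occ_le (.boxR k G' A' (by simpa using hG) h.prov) rfl
    (by simp [h.erase_right]) fun g => by grind⟩

theorem diaR (hA : ThinlyLabellable G A) : ThinlyLabellable [.node G] (.dia A) := by
  intro S hS
  obtain ⟨k, hk⟩ := hS.nonempty
  obtain ⟨G', A', h⟩ := hA (S \ {k}) (hS.sdiff (Set.finite_singleton k))
  exact ⟨_, _, .of_fresh hk h (.diaR k G' A' h.prov) (by simp [h.erase_left])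
    (by simp [h.erase_right]) fun g => by grind [Letter.label]⟩

theorem boxL (hC : ThinlyLabellable (D.plug [.leaf A]) C) :
    ThinlyLabellable (D.plug [.node [.leaf (.box A)]]) C := by
  intro S hS
  obtain ⟨k, hk⟩ := hS.nonempty
  obtain ⟨_, C', h⟩ := hC (S \ {k}) (hS.sdiff (Set.finite_singleton k))
  obtain ⟨D', X, rfl, rfl, hX⟩ := eraseHedge_eq_plug h.erase_left
  obtain ⟨A', rfl, rfl⟩ := eraseHedge_eq_singleton_leaf hX
  exact ⟨_, C', .of_fresh hk h (.boxL k D' A' C' h.prov) (by simp) h.erase_right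
    fun g => by grind [Letter.label]⟩

end ThinlyLabellable

theorem CutFree.thinlyLabellable {H : PHedge} {A : PTy} (h : CutFree H A) :
    ThinlyLabellable H A := by
  induction h with
  | id p => exact .id p
  | ldivL G D A B C _ _ ihA ihC => exact .ldivL ihA ihC
  | ldivR H A B hH _ ih => exact .ldivR hH ih
  | rdivL G D A B C _ _ ihA ihC => exact .rdivL ihA ihC
  | rdivR H A B hH _ ih => exact .rdivR hH ih
  | mulL D A B C _ ih => exact .mulL ih
  | mulR G H A B _ _ ihA ihB => exact .mulR ihA ihB
  | diaL D A C _ ih => exact .diaL ih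
  | diaR G A _ ih => exact .diaR ih
  | boxL D A C _ ih => exact .boxL ih
  | boxR G A hG _ ih => exact .boxR hG ih

end ThinLabelling

section CutReduction

variable {A E : LTy} {L M X Y : List LTy} {B : Finset ℕ} {m : ℕ}

theorem mk_hedgeWord_map_leaf (L : List LTy) :
    FreeGroup.mk (hedgeWord (L.map .leaf)) = (L.map fun T => FreeGroup.mk T.word).prod := by
  induction L with
  | nil => rfl
  | cons T L ih => simp [← ih]

theorem LTy.norm_mk_word_le (A : LTy) : (FreeGroup.mk A.word).norm ≤ lenP A.erase :=
  FreeGroup.norm_mk_le.trans_eq A.length_word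

theorem LTy.norm_mk_word_of_occ_le_one (hA : ∀ g, occ g A.word ≤ 1) :
    (FreeGroup.mk A.word).norm = lenP A.erase := by
  rw [norm_mk_of_isReduced (isReduced_of_nodup_letters (List.nodup_iff_count_le_one.2 hA)),
    A.length_word]

theorem occ_hedgeWord_map_leaf (g : Letter) (L : List LTy) :
    occ g (hedgeWord (L.map .leaf)) = (L.map fun T => occ g T.word).sum := by
  induction L with
  | nil => rfl
  | cons T L ih => simp [← ih]

theorem LTy.over_erase_of_occ_le (hM : ∀ T ∈ M, T.erase.over B)
    (hocc : ∀ g, occ g E.word ≤ occ g (hedgeWord (M.map .leaf))) : E.erase.over B := by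
  refine over_erase_iff.2 fun p k hpk => ?_
  obtain ⟨T, hT, hpos⟩ : ∃ T ∈ M, 0 < occ (.prim p k) T.word := by
    have hsum := hpk.trans_le (hocc _)
    rw [occ_hedgeWord_map_leaf, pos_iff_ne_zero, Ne, List.sum_eq_zero_iff] at hsum
    simpa [pos_iff_ne_zero] using hsum
  exact over_erase_iff.1 (hM T hT) p k hpos

/-- A derivable bracket-free sequent all of whose types are over `B` and of length at most `m`, in
which every letter occurs at most twice. -/
structure IsThinSequent (B : Finset ℕ) (m : ℕ) (L : List LTy) (A : LTy) : Prop where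
  prov : LProv (L.map .leaf) A
  bounded : ∀ T ∈ A :: L, T.erase.over B ∧ lenP T.erase ≤ m
  occ_le_two (g : Letter) : occ g (hedgeWord (L.map .leaf)) + occ g A.word ≤ 2

namespace IsThinSequent

theorem mem_SBm (h : IsThinSequent B m L A) (hL : L.length ≤ 2) :
    (eraseHedge (L.map .leaf), A.erase) ∈ SBm B m := by
  refine ⟨L.map LTy.erase, A.erase, by simp, by simpa, ?_, ?_⟩
  · simpa using h.bounded
  · simpa using h.prov.prov_erase

theorem exists_infix (h : IsThinSequent B m L A) (hL : 3 ≤ L.length) :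
    ∃ X M Y, L = X ++ M ++ Y ∧ 2 ≤ M.length ∧ M.length < L.length ∧
      (FreeGroup.mk (hedgeWord (M.map .leaf))).norm ≤ m := by
  have hle : ∀ T ∈ A :: L, (FreeGroup.mk T.word).norm ≤ m := fun T hT =>
    T.norm_mk_word_le.trans (h.bounded T hT).2
  have hprod : (L.map fun T => FreeGroup.mk T.word).prod.norm ≤ m := by
    rw [← mk_hedgeWord_map_leaf, h.prov.mk_hedgeWord]
    exact hle A List.mem_cons_self
  obtain ⟨X, M, Y, hsplit, hM, hML, hnorm⟩ := exists_infix_norm_prod_le (by simpa)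
    (List.forall_mem_map.2 fun T hT => hle T (List.mem_cons_of_mem _ hT)) hprod
  obtain ⟨XM, Y, rfl, hXM, rfl⟩ := List.map_eq_append_iff.1 hsplit
  obtain ⟨X, M, rfl, rfl, rfl⟩ := List.map_eq_append_iff.1 hXM
  exact ⟨X, M, Y, rfl, by simpa using hM, by simpa using hML, by rwa [mk_hedgeWord_map_leaf]⟩

theorem of_isInterpolant (h : IsThinSequent B m (X ++ M ++ Y) A)
    (hM : (FreeGroup.mk (hedgeWord (M.map .leaf))).norm ≤ m)
    (hE : IsInterpolant (.hole (X.map .leaf) (Y.map .leaf)) (M.map .leaf) A E) :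
    IsThinSequent B m M E ∧ IsThinSequent B m (X ++ E :: Y) A := by
  have hocc (g : Letter) := And.intro (h.occ_le_two g)
    (And.intro (hE.occ_le_left g) (hE.occ_le_right g))
  have hover : E.erase.over B :=
    LTy.over_erase_of_occ_le (fun T hT => (h.bounded T (by simp [hT])).1) hE.occ_le_left
  have hlen : lenP E.erase ≤ m := by
    rwa [← LTy.norm_mk_word_of_occ_le_one fun g => ?_, ← hE.left.mk_hedgeWord]
    have := hocc g
    simp only [List.map_append, hedgeWord_append, occ_append, LCtx.word_hole] at this
    omega
  refine ⟨⟨hE.left, ?_, fun g => ?_⟩, by simpa [LCtx.plug] using hE.right, ?_, fun g => ?_⟩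
  · simp only [List.forall_mem_cons]
    exact ⟨⟨hover, hlen⟩, fun T hT => h.bounded T (by simp [hT])⟩
  · have := hocc g
    simp only [List.map_append, hedgeWord_append, occ_append, LCtx.word_hole] at this
    omega
  · have := h.bounded
    grind
  · have := hocc g
    simp only [List.map_append, List.map_cons, hedgeWord_append, hedgeWord, treeWord, occ_append,
      LCtx.word_hole] at this ⊢
    omega

theorem cutDeriv (h : IsThinSequent B m L A) :
    CutDeriv (SBm B m) (eraseHedge (L.map .leaf)) A.erase := by
  induction hn : L.length using Nat.strong_induction_on generalizing L A with | _ n ih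
  subst hn
  rcases Nat.lt_or_ge 2 L.length with hL | hL
  · obtain ⟨X, M, Y, rfl, hM, hML, hnorm⟩ := h.exists_infix hL
    have hplug : ((X ++ M ++ Y).map .leaf : LHedge) =
        (LCtx.hole (X.map .leaf) (Y.map .leaf)).plug (M.map .leaf) := by simp [LCtx.plug]
    obtain ⟨E, hE⟩ := h.prov.interpolable _ _ hplug
      (List.map_eq_nil_iff.not.2 (List.ne_nil_of_length_pos (by omega)))
    obtain ⟨hleft, hright⟩ := h.of_isInterpolant hnorm hE
    have hlen : (X ++ E :: Y).length < (X ++ M ++ Y).length := by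
      simp only [List.length_append, List.length_cons]
      omega
    have hcut := CutDeriv.cut _ (LCtx.hole (X.map .leaf) (Y.map .leaf)).erase _ _
      (ih _ hML hleft rfl) (by simpa [LCtx.erase, PCtx.plug] using ih _ hlen hright rfl)
    rwa [hplug, eraseHedge_plug]
  · exact .base _ _ (h.mem_SBm hL)

end IsThinSequent

end CutReduction

/-- Every L◇-provable bracket-free sequent over `B` with all types of length ≤ m is
derivable from `S_{B,m}` using the Cut rule only. -/
theorem cut_derivable_from_SBm (B : Finset ℕ) (m : ℕ) (hm : 0 < m)
    (L : List PTy) (A : PTy)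
    (hall : ∀ T ∈ A :: L, PTy.over B T ∧ lenP T ≤ m)
    (h : PProv (L.map PTree.leaf) A) :
    CutDeriv (SBm B m) (L.map PTree.leaf) A := by
  obtain ⟨H', A', h'⟩ := h.cutFree.thinlyLabellable Set.univ Set.infinite_univ
  obtain ⟨L', rfl, rfl⟩ := eraseHedge_eq_map_leaf h'.erase_left
  obtain rfl := h'.erase_right
  have hthin : IsThinSequent B m L' A' := ⟨h'.prov, by simpa using hall, h'.occ_le_two⟩
  simpa using hthin.cutDeriv
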